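/- arXiv:2007.09174 — 2 statements merged into one kernel-verified Lean document; each statement's English description precedes it below -/
import Mathlib

section
/- Let R be a positively graded Noetherian algebra over a field k with char k != 2, and let M be a finitely generated graded R-module with Tor_i^R(M, M) = 0 for all i > 0. Then the Hilbert series of the second exterior power satisfies H_{Λ^2_R(M)}(t) = H_M(t)^2 / (2 H_R(t)) − H_R(t) H_M(t^2) / (2 H_R(t^2)). -/
/-!
All series below are Hilbert series; `s(M) = H_M(t²)`, and `a(M)` is the Hilbert series of the antisymmetric
part of `M ⊗ M`, the image of `id - swap`. As `2` is invertible in `k`, the submodule spanned by the `x ⊗ x`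
is the kernel of `id - swap`, so `Λ² M` has Hilbert series `a(M)` (`hilbertSeries_exteriorSquare`). Hence the
claim follows from the two identities of `tensorSeries_formula`,

  `H_R H_{M ⊗ M} = H_M²`  and  `s(R) (H_{M ⊗ M} - 2 a(M)) = H_R s(M)`.

Instead of an infinite free resolution of `M`, the proof uses one syzygy at a time. Let `F → M` be the free
cover on a homogeneous `k`-basis of `M`, with kernel `N`. The kernel of `F ⊗ F → M ⊗ M` is
`N ⊗ F + F ⊗ N`, and `Tor_1(M, M) = 0` says that these two subspaces meet in `N ⊗ N`, which embeds in
`F ⊗ F` since `Tor_1(N, M) = Tor_2(M, M) = 0`. Counting dimensions, also on antisymmetric parts, expresses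
the series of `M` through those of `N` and of the free module (`exists_syzygy`). It follows that
`H_R H_{M ⊗ M} - H_M²` takes the same value at `M` and at `N`, and that
`s(R) (H_{M ⊗ M} - 2 a(M)) - H_R s(M)` changes sign. By dimension shifting `N` has no higher self-`Tor`
either, and `H_N = (H_R - 1) H_M` has larger order than `H_M` because `R_0 = k`. So both differences are
divisible by every power of `X` and vanish (`dvd_euler_defects`).

Only the vanishing of `Tor` enters, never its values; it is encoded by the injectivity of `K ⊗ B → F ⊗ B`
for flat covers (`TorVanishes`), and the diagram chases for symmetry and dimension shifting are done by hand.
-/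

/-!
STATEMENT 3: Let R be a positively graded Noetherian algebra over a field k with char k ≠ 2
(and R_0 = k), and let M be a finitely generated graded R-module with Tor_i^R(M, M) = 0 for
all i > 0. Then the Hilbert series of the second exterior power satisfies
H_{Λ²_R(M)}(t) = H_M(t)^2 / (2 H_R(t)) − H_R(t) H_M(t²) / (2 H_R(t²)).

`Λ²_R(M)` is realized as `(M ⊗[R] M)/⟨x ⊗ x⟩`; its grading is formalized by quantifying over
any direct sum decomposition compatible with the grading of `M` (such a decomposition is
necessarily the canonical one). Hilbert series live in `ℚ⟦t⟧`, where `H_R(t)` and `H_R(t²)`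
are invertible (constant term `1` since `R_0 = k`), so division is expressed by `⁻¹`.
-/

open CategoryTheory Limits TensorProduct DirectSum

universe u

/-- The Hilbert series of a graded vector space: `H(t) = Σ_n dim_k 𝒩_n t^n`. -/
noncomputable def hilbertSeries {k A : Type u} [Field k] [AddCommGroup A] [Module k A]
    (𝒩 : ℕ → Submodule k A) : PowerSeries ℚ :=
  PowerSeries.mk fun n => (Module.finrank k (𝒩 n) : ℚ)

/-- The Hilbert series with `t` replaced by `t²`: `H(t²) = Σ_n dim_k 𝒩_n t^{2n}`. -/
noncomputable def hilbertSeriesSq {k A : Type u} [Field k] [AddCommGroup A] [Module k A]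
    (𝒩 : ℕ → Submodule k A) : PowerSeries ℚ :=
  PowerSeries.mk fun n => if 2 ∣ n then (Module.finrank k (𝒩 (n / 2)) : ℚ) else 0

variable (R : Type u) [CommRing R] (M : Type u) [AddCommGroup M] [Module R M]

/-- The submodule of `M ⊗[R] M` generated by the squares `x ⊗ x`. -/
noncomputable def wedgeRel : Submodule R (M ⊗[R] M) :=
  Submodule.span R {z | ∃ x : M, z = x ⊗ₜ[R] x}

/-- The second exterior power `Λ²_R(M)`, realized as `(M ⊗[R] M) / ⟨x ⊗ x⟩`.
The class of `x ⊗ y` is the elementary wedge `x ∧ y`. -/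
noncomputable abbrev ExteriorSquare : Type u := (M ⊗[R] M) ⧸ wedgeRel R M

/-! ### Vanishing of Tor without derived functors -/

section Homological

variable {R : Type u} [CommRing R]

/-- `Tor_1^R(A, B) = 0`, expressed through kernels: for every flat module `F` surjecting onto `A`,
tensoring the inclusion of the kernel with `B` stays injective. -/
def TorOneVanishes (R : Type u) [CommRing R] (A B : Type u) [AddCommGroup A] [Module R A]
    [AddCommGroup B] [Module R B] : Prop :=
  ∀ (F : Type u) [AddCommGroup F] [Module R F] [Module.Flat R F] (f : F →ₗ[R] A),
    Function.Surjective f → Function.Injective ((LinearMap.ker f).subtype.rTensor B)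

variable {A B F G : Type u} [AddCommGroup A] [Module R A] [AddCommGroup B] [Module R B]
  [AddCommGroup F] [Module R F] [AddCommGroup G] [Module R G]

/-- The diagram chase behind the symmetry of `Tor_1`: if `K = ker f` satisfies
`K ⊗ B ↪ F ⊗ B` and `L = ker g`, then inside `F ⊗ G` the images of `K ⊗ G` and `F ⊗ L` meet exactly
in the image of `K ⊗ L`. -/
theorem exists_common_lift [Module.Flat R F] (f : F →ₗ[R] A)
    (g : G →ₗ[R] B) (hg : Function.Surjective g)
    (h : Function.Injective ((LinearMap.ker f).subtype.rTensor B))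
    (x : LinearMap.ker f ⊗[R] G) (y : F ⊗[R] LinearMap.ker g)
    (hxy : (LinearMap.ker f).subtype.rTensor G x = (LinearMap.ker g).subtype.lTensor F y) :
    ∃ w : LinearMap.ker f ⊗[R] LinearMap.ker g,
      (LinearMap.ker g).subtype.lTensor _ w = x ∧ (LinearMap.ker f).subtype.rTensor _ w = y := by
  have hex : Function.Exact (LinearMap.ker g).subtype g := LinearMap.exact_subtype_ker_map g
  have h0 : g.lTensor (LinearMap.ker f) x = 0 := by
    apply h
    rw [map_zero, ← LinearMap.comp_apply, LinearMap.rTensor_comp_lTensor,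
      ← LinearMap.lTensor_comp_rTensor, LinearMap.comp_apply, hxy]
    exact (lTensor_exact F hex hg).apply_apply_eq_zero y
  obtain ⟨w, rfl⟩ := (lTensor_exact _ hex hg x).1 h0
  refine ⟨w, rfl, ?_⟩
  apply Module.Flat.lTensor_preserves_injective_linearMap (M := F) _ (LinearMap.ker g).injective_subtype
  rw [← hxy, ← LinearMap.comp_apply, ← LinearMap.comp_apply, LinearMap.rTensor_comp_lTensor,
      LinearMap.lTensor_comp_rTensor]

/-- Balancing of `Tor_1`: its vanishing can be tested on a cover of either argument. -/
theorem lTensor_ker_injective [Module.Flat R F] (f : F →ₗ[R] A) (hf : Function.Surjective f)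
    (g : G →ₗ[R] B) (hg : Function.Surjective g)
    (h : Function.Injective ((LinearMap.ker f).subtype.rTensor B)) :
    Function.Injective ((LinearMap.ker g).subtype.lTensor A) := by
  have hex : Function.Exact (LinearMap.ker f).subtype f := LinearMap.exact_subtype_ker_map f
  rw [injective_iff_map_eq_zero]
  intro z hz
  obtain ⟨y, rfl⟩ := LinearMap.rTensor_surjective (LinearMap.ker g) hf z
  rw [← LinearMap.comp_apply, LinearMap.lTensor_comp_rTensor, ← LinearMap.rTensor_comp_lTensor,
    LinearMap.comp_apply] at hz
  obtain ⟨x, hx⟩ := (rTensor_exact G hex hf _).1 hz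
  obtain ⟨w, -, rfl⟩ := exists_common_lift f g hg h x y hx
  exact (rTensor_exact (LinearMap.ker g) hex hf).apply_apply_eq_zero w

theorem exists_flat_cover (R : Type u) [CommRing R] (B : Type u) [AddCommGroup B] [Module R B] :
    ∃ (G : Type u) (_ : AddCommGroup G) (_ : Module R G) (_ : Module.Flat R G) (g : G →ₗ[R] B),
      Function.Surjective g :=
  ⟨B →₀ R, inferInstance, inferInstance, inferInstance, Finsupp.linearCombination R id,
    Finsupp.linearCombination_id_surjective R B⟩

/-- It suffices to test the vanishing of `Tor_1` on one flat cover of the first argument. -/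
theorem TorOneVanishes.of_cover [Module.Flat R F] (f : F →ₗ[R] A) (hf : Function.Surjective f)
    (h : Function.Injective ((LinearMap.ker f).subtype.rTensor B)) : TorOneVanishes R A B := by
  obtain ⟨G, _, _, _, g, hg⟩ := exists_flat_cover R B
  intro F' _ _ _ f' hf'
  have h1 := lTensor_ker_injective f hf g hg h
  rw [LinearMap.lTensor_inj_iff_rTensor_inj] at h1
  rw [← LinearMap.lTensor_inj_iff_rTensor_inj]
  exact lTensor_ker_injective g hg f' hf' h1

theorem TorOneVanishes.symm (h : TorOneVanishes R A B) : TorOneVanishes R B A := by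
  obtain ⟨F, _, _, _, f, hf⟩ := exists_flat_cover R A
  intro G _ _ _ g hg
  rw [← LinearMap.lTensor_inj_iff_rTensor_inj]
  exact lTensor_ker_injective f hf g hg (h F f hf)

/-- Dimension shifting: if `K` and `L` are the first syzygies of `A` and `B`, then
`Tor_1(A, L) = Tor_2(A, B) = Tor_1(K, B)`. -/
theorem TorOneVanishes.shift [Module.Flat R F] [Module.Flat R G] (f : F →ₗ[R] A)
    (g : G →ₗ[R] B) (hg : Function.Surjective g)
    (h : TorOneVanishes R A (LinearMap.ker g)) (hf : Function.Surjective f) :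
    TorOneVanishes R (LinearMap.ker f) B := by
  apply TorOneVanishes.symm
  apply TorOneVanishes.of_cover g hg
  rw [← LinearMap.lTensor_inj_iff_rTensor_inj]
  have h1 := h F f hf
  have h2 := (Module.Flat.lTensor_preserves_injective_linearMap (M := F) _
    (LinearMap.ker g).injective_subtype).comp h1
  rw [← LinearMap.coe_comp, LinearMap.lTensor_comp_rTensor, ← LinearMap.rTensor_comp_lTensor,
    LinearMap.coe_comp] at h2
  exact h2.of_comp

/-- `Tor_{n+1}^R(A, B) = 0`, defined by dimension shifting in the first argument: the index is off by
one, so that `n = 0` is `TorOneVanishes`. Quantifying over all flat covers makes passing to a syzygy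
definitional. -/
def TorVanishes (R : Type u) [CommRing R] : ℕ → ∀ (A B : Type u) [AddCommGroup A] [Module R A]
    [AddCommGroup B] [Module R B], Prop
  | 0, A, B, _, _, _, _ => TorOneVanishes R A B
  | n + 1, A, B, _, _, _, _ =>
    ∀ (F : Type u) [AddCommGroup F] [Module R F] [Module.Flat R F] (f : F →ₗ[R] A),
      Function.Surjective f → TorVanishes R n (LinearMap.ker f) B

theorem TorVanishes.shift (n : ℕ) : ∀ {A B G : Type u} [AddCommGroup A] [Module R A]
    [AddCommGroup B] [Module R B] [AddCommGroup G] [Module R G] [Module.Flat R G]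
    (g : G →ₗ[R] B), Function.Surjective g → TorVanishes R n A (LinearMap.ker g) →
    TorVanishes R (n + 1) A B := by
  induction n with
  | zero => exact fun g hg h F _ _ _ f hf => TorOneVanishes.shift f g hg h hf
  | succ n ih => exact fun g hg h F _ _ _ f hf => ih g hg (h F f hf)

theorem TorVanishes.symm (n : ℕ) : ∀ {A B : Type u} [AddCommGroup A] [Module R A]
    [AddCommGroup B] [Module R B], TorVanishes R n A B → TorVanishes R n B A := by
  induction n with
  | zero => exact fun h => TorOneVanishes.symm h
  | succ n ih =>
    intro A B _ _ _ _ h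
    obtain ⟨F, _, _, _, f, hf⟩ := exists_flat_cover R A
    exact TorVanishes.shift n f hf (ih (h F f hf))

/-- If a flat resolution of `B` stays exact in positive degrees after tensoring with `A`, then all
higher `Tor`s vanish in the sense of `TorVanishes`. -/
theorem TorVanishes.of_resolution (n : ℕ) : ∀ (B : Type u) [AddCommGroup B] [Module R B]
    (G : ℕ → Type u) [∀ i, AddCommGroup (G i)] [∀ i, Module R (G i)] [∀ i, Module.Flat R (G i)]
    (d : ∀ i, G (i + 1) →ₗ[R] G i) (ε : G 0 →ₗ[R] B), Function.Surjective ε →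
    Function.Exact (d 0) ε → (∀ i, Function.Exact (d (i + 1)) (d i)) →
    (∀ i, Function.Exact ((d (i + 1)).lTensor A) ((d i).lTensor A)) → TorVanishes R n A B := by
  have key : ∀ (B : Type u) [AddCommGroup B] [Module R B]
    (G : ℕ → Type u) [∀ i, AddCommGroup (G i)] [∀ i, Module R (G i)] [∀ i, Module.Flat R (G i)]
    (d : ∀ i, G (i + 1) →ₗ[R] G i) (ε : G 0 →ₗ[R] B), Function.Surjective ε →
    Function.Exact (d 0) ε → (∀ i, Function.Exact (d (i + 1)) (d i)) →
    ∃ d' : G 1 →ₗ[R] LinearMap.ker ε, (LinearMap.ker ε).subtype ∘ₗ d' = d 0 ∧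
      Function.Surjective d' ∧ Function.Exact (d 1) d' := by
    intro B _ _ G _ _ _ d ε hε h0 hd
    refine ⟨(d 0).codRestrict _ fun x => h0.apply_apply_eq_zero x, rfl, ?_, ?_⟩
    · rintro ⟨x, hx⟩
      obtain ⟨y, rfl⟩ := (h0 x).1 hx
      exact ⟨y, rfl⟩
    · intro y
      rw [← hd 0 y, ← Subtype.coe_inj]
      rfl
  induction n with
  | zero =>
    intro B _ _ G _ _ _ d ε hε h0 hd hA
    obtain ⟨d', hd', hs, he⟩ := key B G d ε hε h0 hd
    apply TorOneVanishes.symm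
    apply TorOneVanishes.of_cover ε hε
    rw [← LinearMap.lTensor_inj_iff_rTensor_inj, injective_iff_map_eq_zero]
    intro z hz
    obtain ⟨w, rfl⟩ := LinearMap.lTensor_surjective A hs z
    rw [← LinearMap.comp_apply, ← LinearMap.lTensor_comp, hd'] at hz
    obtain ⟨v, rfl⟩ := (hA 0 w).1 hz
    exact (lTensor_exact A he hs).apply_apply_eq_zero v
  | succ n ih =>
    intro B _ _ G _ _ _ d ε hε h0 hd hA
    obtain ⟨d', hd', hs, he⟩ := key B G d ε hε h0 hd
    exact TorVanishes.shift n ε hε (ih _ (fun i => G (i + 1)) (fun i => d (i + 1)) d' hs he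
      (fun i => hd (i + 1)) (fun i => hA (i + 1)))

/-- The link with the derived functors of the tensor product. -/
theorem torVanishes_of_tor (A B : Type u) [AddCommGroup A] [Module R A] [AddCommGroup B]
    [Module R B] (htor : ∀ i : ℕ, 0 < i →
      IsZero (((Tor (ModuleCat.{u} R) i).obj (ModuleCat.of R A)).obj (ModuleCat.of R B)))
    (n : ℕ) : TorVanishes R n A B := by
  let P : ProjectiveResolution (ModuleCat.of R B) := projectiveResolution _
  have hproj : ∀ i, Module.Projective R (P.complex.X i) := fun i =>
    (IsProjective.iff_projective _).2 (P.projective i)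
  have hflat : ∀ i, Module.Flat R (P.complex.X i) := fun i => inferInstance
  refine TorVanishes.of_resolution n B (fun i => P.complex.X i)
    (fun i => (P.complex.d (i + 1) i).hom) (P.π.f 0).hom ?_ ?_ ?_ ?_
  · exact (ModuleCat.epi_iff_surjective _).1 (inferInstance : Epi (P.π.f 0))
  · exact (ShortComplex.ShortExact.moduleCat_exact_iff_function_exact _).1 P.exact₀
  · intro i
    exact (ShortComplex.ShortExact.moduleCat_exact_iff_function_exact _).1 (P.exact_succ i)
  · intro i
    have h1 := (htor (i + 1) (by omega)).of_iso (P.isoLeftDerivedObj ((MonoidalCategory.tensoringLeft _).obj (ModuleCat.of R A)) (i+1)).symm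
    have h2 := (HomologicalComplex.exactAt_iff_isZero_homology _ _).2 h1
    rw [HomologicalComplex.exactAt_iff' _ (i+2) (i+1) i (by simp) (by simp)] at h2
    exact (ShortComplex.ShortExact.moduleCat_exact_iff_function_exact _).1 h2

end Homological

/-! ### Rank counts for an involution -/

section LinearAlgebra

variable {k A B : Type*} [Field k] [AddCommGroup A] [Module k A] [AddCommGroup B] [Module k B]

theorem finrank_map_add_inf_ker (φ : A →ₗ[k] B) (W : Submodule k A) [FiniteDimensional k W] :
    Module.finrank k (W.map φ) + Module.finrank k (W ⊓ LinearMap.ker φ : Submodule k A) =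
      Module.finrank k W := by
  rw [← LinearMap.finrank_range_add_finrank_ker (φ.domRestrict W), LinearMap.range_domRestrict,
    LinearMap.ker_domRestrict, ← Submodule.finrank_map_subtype_eq W, Submodule.map_comap_subtype]

theorem finrank_map_of_injOn (φ : A →ₗ[k] B) (W : Submodule k A) [FiniteDimensional k W]
    (h : W ⊓ LinearMap.ker φ = ⊥) :
    Module.finrank k (W.map φ) = Module.finrank k W := by
  rw [← finrank_map_add_inf_ker φ W, h, finrank_bot, add_zero]

/-- In the application `A = F ⊗ F` and `B = M ⊗ M` for a free cover `F → M` with kernel `N`, `W` is a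
graded piece of `F ⊗ F`, `σ` swaps the factors, and `K`, `Z` are the corresponding pieces of `N ⊗ F` and
`N ⊗ N`. -/
theorem finrank_quotient_recursion (σ : A →ₗ[k] A) (hσ : ∀ x, σ (σ x) = x) (π : A →ₗ[k] B)
    (W K Z : Submodule k A) [FiniteDimensional k W]
    (hK : W ⊓ LinearMap.ker π = K ⊔ K.map σ) (hZ : K ⊓ K.map σ = Z) :
    Module.finrank k (W.map π) + 2 * Module.finrank k K =
      Module.finrank k W + Module.finrank k Z := by
  have hKW : K ≤ W := le_sup_left.trans (hK.symm.le.trans inf_le_left)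
  have : FiniteDimensional k K := Submodule.finiteDimensional_of_le hKW
  have h1 := finrank_map_add_inf_ker π W
  have h2 := Submodule.finrank_sup_add_finrank_inf_eq K (K.map σ)
  have h3 : Module.finrank k (K.map σ) = Module.finrank k K := by
    apply finrank_map_of_injOn
    rw [LinearMap.ker_eq_bot_of_inverse (g := σ) (by ext x; exact hσ x), inf_bot_eq]
  rw [hK] at h1
  rw [hZ] at h2
  omega

/-- The analogue of `finrank_quotient_recursion` for antisymmetric parts, the antisymmetric part of a
`σ`-stable subspace being its image under `id - σ`. Antisymmetric elements of `K + σ K` are exactly the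
`x - σ x` with `x ∈ K`, and such an element vanishes only if `x` is a symmetric element of `Z`. -/
theorem finrank_antisymmetric_recursion (h2 : (2 : k) ≠ 0) (σ : A →ₗ[k] A)
    (hσ : ∀ x, σ (σ x) = x) (σ' : B →ₗ[k] B) (π : A →ₗ[k] B) (hπ : ∀ x, π (σ x) = σ' (π x))
    (W K Z : Submodule k A) [FiniteDimensional k W] (hW : ∀ x ∈ W, σ x ∈ W)
    (hK : W ⊓ LinearMap.ker π = K ⊔ K.map σ) (hZ : K ⊓ K.map σ = Z) :
    Module.finrank k ((W.map π).map (LinearMap.id - σ')) + Module.finrank k K +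
        Module.finrank k (Z.map (LinearMap.id - σ)) =
      Module.finrank k (W.map (LinearMap.id - σ)) + Module.finrank k Z := by
  have hKW : K ≤ W := le_sup_left.trans (hK.symm.le.trans inf_le_left)
  have hKπ : K ≤ LinearMap.ker π := le_sup_left.trans (hK.symm.le.trans inf_le_right)
  have : FiniteDimensional k K := Submodule.finiteDimensional_of_le hKW
  have hZK : Z ≤ K := hZ ▸ inf_le_left
  have : FiniteDimensional k Z := Submodule.finiteDimensional_of_le hZK
  have e1 : (W.map π).map (LinearMap.id - σ') = (W.map (LinearMap.id - σ)).map π := by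
    rw [← Submodule.map_comp, ← Submodule.map_comp]
    congr 1
    ext x
    simp [hπ]
  have e2 : W.map (LinearMap.id - σ) ⊓ LinearMap.ker π = K.map (LinearMap.id - σ) := by
    apply le_antisymm
    · rintro z ⟨⟨w, hw, rfl⟩, hz⟩
      have hz' : (LinearMap.id - σ : A →ₗ[k] A) w ∈ K ⊔ K.map σ :=
        hK ▸ ⟨W.sub_mem hw (hW w hw), hz⟩
      obtain ⟨x, hx, y', ⟨y, hy, rfl⟩, hxy⟩ := Submodule.mem_sup.1 hz'
      refine ⟨(2 : k)⁻¹ • (x - y), K.smul_mem _ (K.sub_mem hx hy), ?_⟩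
      -- `z = w - σ w = x + σ y` satisfies `σ z = -z`, so `(id - σ) (x - y) = z - σ z = 2 z`
      have e3 : (LinearMap.id - σ : A →ₗ[k] A) (x - y) = (2 : k) • (LinearMap.id - σ : A →ₗ[k] A) w := by
        have : (LinearMap.id - σ : A →ₗ[k] A) (x - y) = (x + σ y) - σ (x + σ y) := by
          simp [hσ]; abel
        rw [this, hxy, two_smul]
        simp [hσ]
        abel
      rw [map_smul, e3, inv_smul_smul₀ h2]
    · rintro _ ⟨x, hx, rfl⟩
      refine ⟨⟨x, hKW hx, rfl⟩, ?_⟩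
      have : π x = 0 := hKπ hx
      simp [hπ, this]
  have e3 : K ⊓ LinearMap.ker (LinearMap.id - σ) = Z ⊓ LinearMap.ker (LinearMap.id - σ) := by
    apply le_antisymm
    · rintro x ⟨hx, hx'⟩
      refine ⟨hZ ▸ ⟨hx, x, hx, ?_⟩, hx'⟩
      exact (sub_eq_zero.1 (by simpa using hx')).symm
    · exact inf_le_inf_right _ hZK
  have f1 := finrank_map_add_inf_ker π (W.map (LinearMap.id - σ))
  have f2 := finrank_map_add_inf_ker (LinearMap.id - σ) K
  have f3 := finrank_map_add_inf_ker (LinearMap.id - σ) Z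
  rw [e2, ← e1] at f1
  rw [e3] at f2
  omega

end LinearAlgebra

/-! ### Graded vector spaces and homogeneous bases -/

section HomogeneousBasis

variable {k A B : Type u} [Field k] [AddCommGroup A] [Module k A] [AddCommGroup B] [Module k B]

/-- `b` is a homogeneous basis of the graded vector space `𝒲`, the vector `b x` having degree
`deg x`. -/
def IsHomBasis {β : Type u} (b : Module.Basis β k A) (deg : β → ℕ) (𝒲 : ℕ → Submodule k A) : Prop :=
  ∀ n, 𝒲 n = Submodule.span k (b '' {x | deg x = n})

theorem exists_homBasis {𝒲 : ℕ → Submodule k A} (h : IsInternal 𝒲) :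
    ∃ (β : Type u) (b : Module.Basis β k A) (deg : β → ℕ), IsHomBasis b deg 𝒲 := by
  classical
  let v : ∀ n, Module.Basis (Module.Basis.ofVectorSpaceIndex k (𝒲 n)) k (𝒲 n) := fun n =>
    Module.Basis.ofVectorSpace k (𝒲 n)
  refine ⟨Σ n, Module.Basis.ofVectorSpaceIndex k (𝒲 n), h.collectedBasis v, Sigma.fst, fun n => ?_⟩
  have h1 : h.collectedBasis v '' {x | x.1 = n} = (𝒲 n).subtype '' Set.range (v n) := by
    ext x
    simp only [IsInternal.collectedBasis_coe, Set.mem_image, Set.mem_range, Set.mem_ofPred_eq]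
    constructor
    · rintro ⟨⟨m, a⟩, rfl, rfl⟩
      exact ⟨_, ⟨a, rfl⟩, rfl⟩
    · rintro ⟨_, ⟨a, rfl⟩, rfl⟩
      exact ⟨⟨n, a⟩, rfl, rfl⟩
  rw [h1, ← Submodule.map_span, (v n).span_eq, Submodule.map_subtype_top]

/-- The projections of a graded vector space onto its homogeneous components. -/
theorem exists_proj {𝒲 : ℕ → Submodule k A} (h : IsInternal 𝒲) :
    ∃ p : ℕ → A →ₗ[k] A, (∀ n, ∀ x ∈ 𝒲 n, p n x = x) ∧
      (∀ m n, m ≠ n → ∀ x ∈ 𝒲 m, p n x = 0) ∧ (∀ n x, p n x ∈ 𝒲 n) ∧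
      ∀ x, ∃ s : Finset ℕ, ∑ n ∈ s, p n x = x := by
  classical
  let _ := h.chooseDecomposition
  refine ⟨fun n => (𝒲 n).subtype ∘ₗ DirectSum.component k ℕ (fun i => 𝒲 i) n ∘ₗ
    (decomposeLinearEquiv 𝒲).toLinearMap, ?_, ?_, ?_, ?_⟩
  · intro n x hx
    exact decompose_of_mem_same 𝒲 hx
  · intro m n hmn x hx
    exact decompose_of_mem_ne 𝒲 hx hmn
  · intro n x
    exact Subtype.mem _
  · intro x
    exact ⟨_, sum_support_decompose 𝒲 x⟩

theorem isInternal_of_proj {𝒲 : ℕ → Submodule k A} (htop : ⨆ n, 𝒲 n = ⊤)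
    (p : ℕ → A →ₗ[k] B) (h1 : ∀ n, ∀ x ∈ 𝒲 n, p n x = 0 → x = 0)
    (h2 : ∀ m n, m ≠ n → ∀ x ∈ 𝒲 m, p n x = 0) : IsInternal 𝒲 := by
  rw [isInternal_submodule_iff_iSupIndep_and_iSup_eq_top]
  refine ⟨fun n => ?_, htop⟩
  rw [Submodule.disjoint_def]
  intro x hx hx'
  apply h1 n x hx
  have : ⨆ m, ⨆ (_ : m ≠ n), 𝒲 m ≤ LinearMap.ker (p n) :=
    iSup₂_le fun m hm x hx => h2 m n hm x hx
  exact this hx'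

/-- The kernel of a graded map is graded; the kernel is presented as the image of an injection `ι`. -/
theorem isInternal_ker {𝒱 : ℕ → Submodule k A} {𝒲 : ℕ → Submodule k B} (hV : IsInternal 𝒱)
    (hW : IsInternal 𝒲) (φ : A →ₗ[k] B) (hφ : ∀ n, ∀ x ∈ 𝒱 n, φ x ∈ 𝒲 n) {C : Type u}
    [AddCommGroup C] [Module k C] (ι : C →ₗ[k] A) (hι : Function.Injective ι)
    (hex : LinearMap.range ι = LinearMap.ker φ) :
    IsInternal fun n => (𝒱 n).comap ι := by
  obtain ⟨p, p1, p2, p3, p4⟩ := exists_proj hV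
  obtain ⟨q, q1, q2, -, -⟩ := exists_proj hW
  have hpq : ∀ n x, φ (p n x) = q n (φ x) := by
    intro n x
    have hx : x ∈ ⨆ n, 𝒱 n := hV.submodule_iSup_eq_top ▸ Submodule.mem_top
    induction hx using Submodule.iSup_induction' with
    | mem m x hx =>
      by_cases hmn : m = n
      · subst hmn; rw [p1 _ _ hx, q1 _ _ (hφ _ _ hx)]
      · rw [p2 _ _ hmn _ hx, q2 _ _ hmn _ (hφ _ _ hx), map_zero]
    | zero => simp
    | add x y _ _ hx hy => simp [hx, hy]
  apply isInternal_of_proj (p := fun n => p n ∘ₗ ι)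
  · rw [eq_top_iff]
    rintro x -
    obtain ⟨s, hs⟩ := p4 (ι x)
    have hk : ∀ n, ∃ y, ι y = p n (ι x) := fun n => by
      have : p n (ι x) ∈ LinearMap.range ι := by
        rw [hex, LinearMap.mem_ker, hpq]
        have : ι x ∈ LinearMap.ker φ := hex ▸ ⟨x, rfl⟩
        rw [LinearMap.mem_ker.1 this, map_zero]
      exact this
    choose y hy using hk
    have : x = ∑ n ∈ s, y n := hι (by rw [map_sum]; simp [hy, hs])
    rw [this]
    refine Submodule.sum_mem _ fun n _ => Submodule.mem_iSup_of_mem n ?_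
    rw [Submodule.mem_comap, hy]
    exact p3 n _
  · intro n x hx h0
    exact hι (by rw [map_zero, ← p1 n _ hx]; exact h0)
  · intro m n hmn x hx
    exact p2 m n hmn _ hx

/-- If the image under a graded map `φ` of an arbitrary element is homogeneous of degree `n`, it is
already the image of an element of degree `n`. The projections `p` do not depend on `φ`. -/
theorem exists_preimage_of_graded {𝒱 : ℕ → Submodule k A} {𝒲 : ℕ → Submodule k B}
    (hV : ⨆ n, 𝒱 n = ⊤) (hW : IsInternal 𝒲) :
    ∃ p : ℕ → B →ₗ[k] B, (∀ n, ∀ x ∈ 𝒲 n, p n x = x) ∧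
    ∀ (φ : A →ₗ[k] B) (_ : ∀ n, ∀ x ∈ 𝒱 n, φ x ∈ 𝒲 n) (n : ℕ) (x : A), p n (φ x) ∈ (𝒱 n).map φ := by
  obtain ⟨p, p1, p2, -, -⟩ := exists_proj hW
  refine ⟨p, p1, fun φ hφ n x => ?_⟩
  have hx : x ∈ ⨆ n, 𝒱 n := hV ▸ Submodule.mem_top
  induction hx using Submodule.iSup_induction' with
  | mem m x hx =>
    by_cases hmn : m = n
    · subst hmn; rw [p1 _ _ (hφ _ _ hx)]; exact ⟨x, hx, rfl⟩
    · rw [p2 _ _ hmn _ (hφ _ _ hx)]; exact Submodule.zero_mem _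
  | zero => simp
  | add x y _ _ hx hy => rw [map_add, map_add]; exact Submodule.add_mem _ hx hy

namespace IsHomBasis
variable {β : Type u} {b : Module.Basis β k A} {deg : β → ℕ} {𝒲 : ℕ → Submodule k A}

theorem mem (h : IsHomBasis b deg 𝒲) (x : β) : b x ∈ 𝒲 (deg x) := by
  rw [h]; exact Submodule.subset_span ⟨x, rfl, rfl⟩

theorem isInternal (h : IsHomBasis b deg 𝒲) : IsInternal 𝒲 := by
  classical
  have key : ∀ n, ∀ x ∈ 𝒲 n, ∀ m, b.constr k (fun i => if deg i = m then b i else 0) x =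
      if n = m then x else 0 := by
    intro n x hx m
    rw [h] at hx
    induction hx using Submodule.span_induction with
    | mem x hx =>
      obtain ⟨i, rfl, rfl⟩ := hx
      rw [Module.Basis.constr_basis]
    | zero => simp
    | add x y _ _ hx hy => rw [map_add, hx, hy]; split_ifs <;> simp
    | smul a x _ hx => rw [map_smul, hx]; split_ifs <;> simp
  apply isInternal_of_proj (p := fun m => b.constr k (fun i => if deg i = m then b i else 0))
  · rw [eq_top_iff, ← b.span_eq, Submodule.span_le]
    rintro _ ⟨i, rfl⟩
    exact Submodule.mem_iSup_of_mem _ (h.mem i)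
  · intro n x hx h0
    rw [key n x hx n, if_pos rfl] at h0
    exact h0
  · intro m n hmn x hx
    rw [key m x hx n, if_neg hmn]

theorem exists_basis_component (h : IsHomBasis b deg 𝒲) (n : ℕ) :
    Nonempty (Module.Basis {x // deg x = n} k (𝒲 n)) := by
  have h1 : LinearIndependent k (fun x : {x // deg x = n} => b x) :=
    b.linearIndependent.comp _ Subtype.val_injective
  have h2 : Submodule.span k (Set.range fun x : {x // deg x = n} => b x) = 𝒲 n := by
    rw [h]
    congr 1
    ext x; simp
  rw [← h2]
  exact ⟨Module.Basis.span h1⟩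

theorem finrank_eq (h : IsHomBasis b deg 𝒲) (n : ℕ) :
    Module.finrank k (𝒲 n) = Nat.card {x // deg x = n} := by
  obtain ⟨c⟩ := h.exists_basis_component n
  exact Module.finrank_eq_nat_card_basis c

theorem finite_fiber (h : IsHomBasis b deg 𝒲) (hfd : ∀ n, FiniteDimensional k (𝒲 n)) (n : ℕ) :
    Finite {x // deg x = n} := by
  have := hfd n
  obtain ⟨c⟩ := h.exists_basis_component n
  exact Module.Finite.finite_basis c

theorem finiteDimensional (h : IsHomBasis b deg 𝒲) (n : ℕ) [Finite {x // deg x = n}] :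
    FiniteDimensional k (𝒲 n) := by
  obtain ⟨c⟩ := h.exists_basis_component n
  exact Module.Finite.of_basis c

end IsHomBasis

end HomogeneousBasis

set_option linter.unusedSectionVars false

/-! ### Gradings on tensor products and on free modules -/

section TensorGrading

variable {k R A B C : Type u} [Field k] [CommRing R] [Algebra k R]
  [AddCommGroup A] [Module R A] [Module k A] [IsScalarTower k R A]
  [AddCommGroup B] [Module R B] [Module k B] [IsScalarTower k R B]

/-- The degree `n` part of `A ⊗[R] B`: the `k`-span of the `x ⊗ y` with `deg x + deg y = n`. -/
def tensorGrading (R : Type u) {k A B : Type u} [Field k] [CommRing R] [Algebra k R]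
    [AddCommGroup A] [Module R A] [Module k A] [IsScalarTower k R A]
    [AddCommGroup B] [Module R B] [Module k B] [IsScalarTower k R B]
    (𝒱 : ℕ → Submodule k A) (𝒲 : ℕ → Submodule k B) (n : ℕ) :
    Submodule k (A ⊗[R] B) :=
  Submodule.span k {z | ∃ i j, i + j = n ∧ ∃ x ∈ 𝒱 i, ∃ y ∈ 𝒲 j, x ⊗ₜ[R] y = z}

variable {𝒱 : ℕ → Submodule k A} {𝒲 : ℕ → Submodule k B}

theorem tmul_mem_tensorGrading {i j n : ℕ} (h : i + j = n) {x : A} (hx : x ∈ 𝒱 i) {y : B}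
    (hy : y ∈ 𝒲 j) : x ⊗ₜ[R] y ∈ tensorGrading R 𝒱 𝒲 n :=
  Submodule.subset_span ⟨i, j, h, x, hx, y, hy, rfl⟩

theorem tensorGrading_le {n : ℕ} {S : Submodule k (A ⊗[R] B)}
    (h : ∀ i j, i + j = n → ∀ x ∈ 𝒱 i, ∀ y ∈ 𝒲 j, x ⊗ₜ[R] y ∈ S) :
    tensorGrading R 𝒱 𝒲 n ≤ S := by
  rw [tensorGrading, Submodule.span_le]
  rintro _ ⟨i, j, hij, x, hx, y, hy, rfl⟩
  exact h i j hij x hx y hy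

theorem iSup_tensorGrading (hV : ⨆ n, 𝒱 n = ⊤) (hW : ⨆ n, 𝒲 n = ⊤) :
    ⨆ n, tensorGrading R 𝒱 𝒲 n = ⊤ := by
  rw [eq_top_iff]
  rintro z -
  induction z using TensorProduct.induction_on with
  | zero => exact Submodule.zero_mem _
  | add x y hx hy => exact Submodule.add_mem _ hx hy
  | tmul x y =>
    have hx : x ∈ ⨆ n, 𝒱 n := hV ▸ Submodule.mem_top
    have hy : y ∈ ⨆ n, 𝒲 n := hW ▸ Submodule.mem_top
    induction hx using Submodule.iSup_induction' with
    | zero => rw [zero_tmul]; exact Submodule.zero_mem _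
    | add x x' _ _ hx hx' => rw [add_tmul]; exact Submodule.add_mem _ hx hx'
    | mem i x hx =>
      induction hy using Submodule.iSup_induction' with
      | zero => rw [tmul_zero]; exact Submodule.zero_mem _
      | add y y' _ _ hy hy' => rw [tmul_add]; exact Submodule.add_mem _ hy hy'
      | mem j y hy => exact Submodule.mem_iSup_of_mem (i + j) (tmul_mem_tensorGrading rfl hx hy)

instance finiteDimensional_tensorGrading [∀ n, FiniteDimensional k (𝒱 n)]
    [∀ n, FiniteDimensional k (𝒲 n)] (n : ℕ) :
    FiniteDimensional k (tensorGrading R 𝒱 𝒲 n) := by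
  let μ : A →ₗ[k] B →ₗ[k] A ⊗[R] B := LinearMap.mk₂ k (fun x y => x ⊗ₜ[R] y)
    add_tmul (fun c x y => (smul_tmul' c x y).symm) tmul_add (fun c x y => tmul_smul c x y)
  have h : tensorGrading R 𝒱 𝒲 n ≤
      ⨆ i : Fin (n + 1), Submodule.map₂ μ (𝒱 i) (𝒲 (n - i)) := by
    apply tensorGrading_le
    intro i j hij x hx y hy
    apply Submodule.mem_iSup_of_mem (⟨i, by omega⟩ : Fin (n + 1))
    have : n - i = j := by omega
    exact Submodule.apply_mem_map₂ μ hx (this ▸ hy)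
  have hfd : ∀ i : Fin (n + 1), FiniteDimensional k (Submodule.map₂ μ (𝒱 i) (𝒲 (n - i))) := by
    intro i
    rw [← Submodule.fg_iff_finiteDimensional]
    exact Submodule.FG.map₂ μ ((Submodule.fg_iff_finiteDimensional _).2 inferInstance)
      ((Submodule.fg_iff_finiteDimensional _).2 inferInstance)
  exact Submodule.finiteDimensional_of_le h

section Basis

variable {F : Type u} [AddCommGroup F] [Module R F] [Module k F] [IsScalarTower k R F]
  {α ι : Type u} (a : Module.Basis α k A) (b : Module.Basis ι R F)

/-- A `k`-basis of `A` and an `R`-basis of `F` give a `k`-basis of `A ⊗[R] F`. -/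
theorem exists_tensor_basis : ∃ c : Module.Basis (α × ι) k (A ⊗[R] F),
    ∀ x i, c (x, i) = a x ⊗ₜ[R] b i := by
  classical
  let E : A ⊗[R] F ≃ₗ[R] (ι →₀ A) :=
    (TensorProduct.congr (LinearEquiv.refl R A) b.repr).trans
      (TensorProduct.finsuppScalarRight R R A ι)
  let c0 : Module.Basis (Σ _ : ι, α) k (ι →₀ A) := Finsupp.basis fun _ => a
  refine ⟨(c0.map (E.restrictScalars k).symm).reindex
    ((Equiv.sigmaEquivProd ι α).trans (Equiv.prodComm ι α)), fun x i => ?_⟩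
  have h1 : c0 ⟨i, x⟩ = Finsupp.single i (a x) := by
    simp [c0, Finsupp.coe_basis]
  have h2 : E (a x ⊗ₜ[R] b i) = Finsupp.single i (a x) := by
    rw [LinearEquiv.trans_apply, TensorProduct.congr_tmul, Module.Basis.repr_self,
      LinearEquiv.refl_apply, ← TensorProduct.finsuppScalarRight_symm_apply_single (S := R),
      LinearEquiv.apply_symm_apply]
  rw [Module.Basis.reindex_apply, Module.Basis.map_apply, LinearEquiv.symm_apply_eq]
  exact h1.trans h2.symm

/-- The grading of a free `R`-module with basis `b` in which `b i` has degree `db i`. -/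
def freeGrading (𝒜 : ℕ → Submodule k R) (b : Module.Basis ι R F) (db : ι → ℕ) (n : ℕ) :
    Submodule k F :=
  Submodule.span k {z | ∃ m i, m + db i = n ∧ ∃ r ∈ 𝒜 m, r • b i = z}

variable {𝒜 : ℕ → Submodule k R} {db : ι → ℕ}

theorem freeGrading_le {n : ℕ} {S : Submodule k F}
    (h : ∀ m i, m + db i = n → ∀ r ∈ 𝒜 m, r • b i ∈ S) : freeGrading 𝒜 b db n ≤ S := by
  rw [freeGrading, Submodule.span_le]
  rintro _ ⟨m, i, hij, x, hx, rfl⟩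
  exact h m i hij x hx

theorem smul_basis_mem_freeGrading {m n : ℕ} {i : ι} (h : m + db i = n) {r : R} (hr : r ∈ 𝒜 m) :
    r • b i ∈ freeGrading 𝒜 b db n :=
  Submodule.subset_span ⟨m, i, h, r, hr, rfl⟩

theorem smul_mem_freeGrading (hmul : ∀ i j (a b : R), a ∈ 𝒜 i → b ∈ 𝒜 j → a * b ∈ 𝒜 (i + j))
    (i j : ℕ) (r : R) (x : F) (hr : r ∈ 𝒜 i) (hx : x ∈ freeGrading 𝒜 b db j) :
    r • x ∈ freeGrading 𝒜 b db (i + j) := by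
  have h : freeGrading 𝒜 b db j ≤ (freeGrading 𝒜 b db (i + j)).comap
      ((LinearMap.lsmul R F r).restrictScalars k) := by
    apply freeGrading_le
    intro m i' hm s hs
    change r • s • b i' ∈ freeGrading 𝒜 b db (i + j)
    rw [smul_smul]
    exact smul_basis_mem_freeGrading b (by omega) (hmul _ _ _ _ hr hs)
  exact h hx

theorem isHomBasis_freeGrading {κ : Type u} {ρ : Module.Basis κ k R} {dρ : κ → ℕ}
    (hρ : IsHomBasis ρ dρ 𝒜) :
    IsHomBasis (ρ.smulTower b) (fun p => dρ p.1 + db p.2) (freeGrading 𝒜 b db) := by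
  intro n
  apply le_antisymm
  · apply freeGrading_le
    intro m i hm r hr
    rw [hρ] at hr
    induction hr using Submodule.span_induction with
    | mem r hr =>
      obtain ⟨x, rfl, rfl⟩ := hr
      exact Submodule.subset_span ⟨(x, i), hm, Module.Basis.smulTower_apply _ _ _⟩
    | zero => rw [zero_smul]; exact Submodule.zero_mem _
    | add x y _ _ hx hy => rw [add_smul]; exact Submodule.add_mem _ hx hy
    | smul c x _ hx => rw [smul_assoc]; exact Submodule.smul_mem _ _ hx
  · rw [Submodule.span_le]
    rintro _ ⟨⟨x, i⟩, rfl, rfl⟩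
    rw [Module.Basis.smulTower_apply]
    exact smul_basis_mem_freeGrading b rfl (hρ.mem x)

theorem isHomBasis_tensorGrading {da : α → ℕ} {a : Module.Basis α k A} (ha : IsHomBasis a da 𝒱)
    (hsm : ∀ i j (r : R) (x : A), r ∈ 𝒜 i → x ∈ 𝒱 j → r • x ∈ 𝒱 (i + j))
    (h1 : (1 : R) ∈ 𝒜 0) {c : Module.Basis (α × ι) k (A ⊗[R] F)}
    (hc : ∀ x i, c (x, i) = a x ⊗ₜ[R] b i) :
    IsHomBasis c (fun p => da p.1 + db p.2) (tensorGrading R 𝒱 (freeGrading 𝒜 b db)) := by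
  intro n
  apply le_antisymm
  · apply tensorGrading_le
    intro l j hlj x hx y hy
    have key : freeGrading 𝒜 b db j ≤ (Submodule.span k (c '' {p | da p.1 + db p.2 = n})).comap
        ((TensorProduct.mk R A F x).restrictScalars k) := by
      apply freeGrading_le
      intro m i hm r hr
      change x ⊗ₜ[R] (r • b i) ∈ Submodule.span k (c '' {p | da p.1 + db p.2 = n})
      rw [tmul_smul, smul_tmul']
      have hrx := hsm _ _ r x hr hx
      rw [ha] at hrx
      generalize r • x = x' at hrx
      induction hrx using Submodule.span_induction with
      | mem x hx =>
        obtain ⟨x, hx, rfl⟩ := hx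
        change da x = _ at hx
        exact Submodule.subset_span ⟨(x, i), by change da x + db i = n; omega, hc _ _⟩
      | zero => rw [zero_tmul]; exact Submodule.zero_mem _
      | add x y _ _ hx hy => rw [add_tmul]; exact Submodule.add_mem _ hx hy
      | smul c x _ hx => rw [← smul_tmul']; exact Submodule.smul_mem _ _ hx
    exact key hy
  · rw [Submodule.span_le]
    rintro _ ⟨⟨x, i⟩, rfl, rfl⟩
    rw [hc]
    refine tmul_mem_tensorGrading rfl (ha.mem x) ?_
    rw [← one_smul R (b i)]
    exact smul_basis_mem_freeGrading b (zero_add _) h1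

end Basis

end TensorGrading

/-! ### Hilbert series as counting series -/

section Counting

/-- The generating function `Σ_n #{x | deg x = n} t^n`; the coefficients are meaningful when the fibres
of `deg` are finite, as `Nat.card` of an infinite type is `0`. -/
noncomputable def countSeries {β : Type u} (deg : β → ℕ) : PowerSeries ℚ :=
  PowerSeries.mk fun n => (Nat.card {x // deg x = n} : ℚ)

/-- Pairs of total degree `n`, sorted by the degrees of their two entries. -/
def fiberSumEquiv {β γ : Type u} (d : β → ℕ) (e : γ → ℕ) (n : ℕ) :
    {p : β × γ // d p.1 + e p.2 = n} ≃
      Σ ij : Finset.HasAntidiagonal.antidiagonal n, {x // d x = ij.1.1} × {y // e y = ij.1.2} where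
  toFun p := ⟨⟨(d p.1.1, e p.1.2), Finset.HasAntidiagonal.mem_antidiagonal.2 p.2⟩, ⟨p.1.1, rfl⟩, ⟨p.1.2, rfl⟩⟩
  invFun q := ⟨(q.2.1.1, q.2.2.1), by
    rw [q.2.1.2, q.2.2.2]; exact Finset.HasAntidiagonal.mem_antidiagonal.1 q.1.2⟩
  left_inv p := rfl
  right_inv := by
    rintro ⟨⟨⟨i, j⟩, h⟩, ⟨x, hx⟩, ⟨y, hy⟩⟩
    dsimp only at hx hy
    subst hx hy
    rfl

theorem finite_fiber_add {β γ : Type u} {d : β → ℕ} {e : γ → ℕ} (hd : ∀ n, Finite {x // d x = n})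
    (he : ∀ n, Finite {x // e x = n}) (n : ℕ) : Finite {p : β × γ // d p.1 + e p.2 = n} :=
  Finite.of_equiv _ (fiberSumEquiv d e n).symm

theorem countSeries_add {β γ : Type u} {d : β → ℕ} {e : γ → ℕ} (hd : ∀ n, Finite {x // d x = n})
    (he : ∀ n, Finite {x // e x = n}) :
    countSeries (fun p : β × γ => d p.1 + e p.2) = countSeries d * countSeries e := by
  ext n
  rw [PowerSeries.coeff_mul]
  simp only [countSeries, PowerSeries.coeff_mk]
  rw [Nat.card_congr (fiberSumEquiv d e n), Nat.card_sigma]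
  simp only [Nat.card_prod]
  push_cast
  exact Finset.sum_coe_sort (Finset.HasAntidiagonal.antidiagonal n)
    (fun ij => (Nat.card {x // d x = ij.1} : ℚ) * (Nat.card {y // e y = ij.2} : ℚ))

theorem finite_fiber_two_mul {β : Type u} {d : β → ℕ} (hd : ∀ n, Finite {x // d x = n}) (n : ℕ) :
    Finite {x // 2 * d x = n} :=
  Finite.of_injective (fun x => (⟨x.1, by omega⟩ : {x // d x = n / 2}))
    fun x y h => Subtype.ext (congrArg (fun z => z.1) h)

variable {k A : Type u} [Field k] [AddCommGroup A] [Module k A] {β : Type u}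
  {b : Module.Basis β k A} {deg : β → ℕ} {𝒲 : ℕ → Submodule k A}

theorem IsHomBasis.hilbertSeries_eq (h : IsHomBasis b deg 𝒲) :
    hilbertSeries 𝒲 = countSeries deg := by
  ext n
  simp [hilbertSeries, countSeries, h.finrank_eq]

theorem IsHomBasis.hilbertSeriesSq_eq (h : IsHomBasis b deg 𝒲) :
    hilbertSeriesSq 𝒲 = countSeries fun x => 2 * deg x := by
  ext n
  simp only [hilbertSeriesSq, countSeries, PowerSeries.coeff_mk, h.finrank_eq]
  split_ifs with hn
  · congr 1
    refine Nat.card_congr (Equiv.subtypeEquivRight fun x => ?_)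
    omega
  · have : IsEmpty {x // 2 * deg x = n} := ⟨fun x => hn ⟨_, x.2.symm⟩⟩
    simp

/-- Suppose an involution `σ` permutes a homogeneous basis through `τ`, and `P` selects one element of
each two-element orbit of `τ`. Then the `b x - b (τ x)` with `P x` form a basis of the antisymmetric part,
so twice its dimension plus the number of fixed points is the full dimension. -/
theorem finrank_antisymmetric_of_basis (h : IsHomBasis b deg 𝒲)
    (hfin : ∀ n, Finite {x // deg x = n}) (σ : A →ₗ[k] A) (τ : β → β)
    (hστ : ∀ x, σ (b x) = b (τ x)) (hττ : ∀ x, τ (τ x) = x) (hdeg : ∀ x, deg (τ x) = deg x)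
    (P : β → Prop) (hP : ∀ x, P (τ x) ↔ ¬ P x ∧ τ x ≠ x) (n : ℕ) :
    2 * Module.finrank k ((𝒲 n).map (LinearMap.id - σ)) + Nat.card {x // deg x = n ∧ τ x = x} =
      Module.finrank k (𝒲 n) := by
  classical
  have := hfin n
  set T : Set β := {x | deg x = n ∧ P x} with hT
  set K : Submodule k A := Submodule.span k (b '' T) with hK
  have hfinT : Finite T := Finite.of_injective (fun x : T => (⟨x.1, x.2.1⟩ : {x // deg x = n}))
    fun x y h => Subtype.ext (congrArg (fun z => z.1) h)
  have hfd : FiniteDimensional k K := FiniteDimensional.span_of_finite k (Set.toFinite _)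
  have hKrank : Module.finrank k K = Nat.card T := by
    have h1 : LinearIndependent k (fun x : T => b x) :=
      b.linearIndependent.comp _ Subtype.val_injective
    have h2 : K = Submodule.span k (Set.range fun x : T => b x) := by
      rw [hK]; congr 1; ext x; simp
    rw [h2]
    exact Module.finrank_eq_nat_card_basis (Module.Basis.span h1)
  have hmap : (𝒲 n).map (LinearMap.id - σ) = K.map (LinearMap.id - σ) := by
    apply le_antisymm
    · rw [h n, Submodule.map_span, Submodule.span_le]
      rintro _ ⟨_, ⟨x, hx, rfl⟩, rfl⟩
      change deg x = n at hx
      rw [LinearMap.sub_apply, hστ, LinearMap.id_apply]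
      by_cases h1 : P x
      · exact ⟨b x, Submodule.subset_span ⟨x, ⟨hx, h1⟩, rfl⟩, by simp [hστ]⟩
      · by_cases h2 : τ x = x
        · rw [h2, sub_self]; exact Submodule.zero_mem _
        · refine ⟨-b (τ x), Submodule.neg_mem _ (Submodule.subset_span
            ⟨τ x, ⟨(hdeg x).trans hx, (hP x).2 ⟨h1, h2⟩⟩, rfl⟩), ?_⟩
          simp [hστ, hττ]
          try abel
    · refine Submodule.map_mono ?_
      rw [h n]
      exact Submodule.span_mono (Set.image_mono fun x hx => hx.1)
  have hinj : K ⊓ LinearMap.ker (LinearMap.id - σ) = ⊥ := by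
    rw [eq_bot_iff]
    rintro x ⟨hx, hx'⟩
    have hx1 : x = σ x := sub_eq_zero.1 (by simpa using hx')
    have hx2 : σ x ∈ Submodule.span k (b '' (τ '' T)) := by
      have : σ x ∈ K.map σ := ⟨x, hx, rfl⟩
      rw [hK, Submodule.map_span] at this
      refine Submodule.span_mono ?_ this
      rintro _ ⟨_, ⟨y, hy, rfl⟩, rfl⟩
      exact ⟨τ y, ⟨y, hy, rfl⟩, (hστ y).symm⟩
    have hdis : Disjoint T (τ '' T) := by
      rw [Set.disjoint_left]
      rintro _ ⟨-, h1⟩ ⟨y, ⟨-, h2⟩, rfl⟩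
      exact ((hP y).1 h1).1 h2
    exact (Submodule.disjoint_def.1 (b.linearIndependent.disjoint_span_image hdis)) x hx
      (hx1 ▸ hx2)
  rw [hmap, finrank_map_of_injOn _ _ hinj, hKrank, h.finrank_eq]
  -- the fibre of `deg` over `n` splits into the `x` with `P x`, their images under `τ`, and the
  -- fixed points of `τ`
  have hfinS : Finite {x // deg x = n ∧ τ x = x} :=
    Finite.of_injective (fun x => (⟨x.1, x.2.1⟩ : {x // deg x = n}))
      fun x y h => Subtype.ext (congrArg (fun z => z.1) h)
  let e : (T ⊕ T) ⊕ {x // deg x = n ∧ τ x = x} → {x // deg x = n} :=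
    Sum.elim (Sum.elim (fun x => ⟨x.1, x.2.1⟩) (fun x => ⟨τ x.1, (hdeg _).trans x.2.1⟩))
      (fun x => ⟨x.1, x.2.1⟩)
  have hPτ : ∀ x, P x → τ x ≠ x := fun x hx h => by
    have := (hP x).1 (h.symm ▸ hx)
    exact this.2 h
  have hPτ' : ∀ x, P x → ¬ P (τ x) := fun x hx h => ((hP x).1 h).1 hx
  have he : Function.Bijective e := by
    constructor
    · rintro ((⟨x, hx, hx'⟩ | ⟨x, hx, hx'⟩) | ⟨x, hx, hx'⟩)
        ((⟨y, hy, hy'⟩ | ⟨y, hy, hy'⟩) | ⟨y, hy, hy'⟩) hxy <;>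
      · have hxy' := congrArg (fun z => z.1) hxy
        simp only [e, Sum.elim_inl, Sum.elim_inr] at hxy'
        grind
    · rintro ⟨x, hx⟩
      by_cases h1 : P x
      · exact ⟨Sum.inl (Sum.inl ⟨x, hx, h1⟩), rfl⟩
      · by_cases h2 : τ x = x
        · exact ⟨Sum.inr ⟨x, hx, h2⟩, rfl⟩
        · exact ⟨Sum.inl (Sum.inr ⟨τ x, (hdeg x).trans hx, (hP x).2 ⟨h1, h2⟩⟩),
            Subtype.ext (hττ x)⟩
  rw [← Nat.card_eq_of_bijective e he, Nat.card_sum, Nat.card_sum]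
  omega

end Counting

/-! ### Graded modules and their syzygies -/

section Syzygy

variable {k R : Type u} [Field k] [CommRing R] [Algebra k R] {𝒜 : ℕ → Submodule k R}

/-- The properties of the grading of `R` used below, as a predicate on the family of components:
a grading by finite-dimensional subspaces whose degree zero part is one-dimensional. -/
structure ConnectedGrading (𝒜 : ℕ → Submodule k R) : Prop where
  isInternal : IsInternal 𝒜
  one_mem : (1 : R) ∈ 𝒜 0
  mul_mem : ∀ i j (r s : R), r ∈ 𝒜 i → s ∈ 𝒜 j → r * s ∈ 𝒜 (i + j)
  finiteDimensional : ∀ n, FiniteDimensional k (𝒜 n)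
  finrank_zero : Module.finrank k (𝒜 0) = 1

/-- `ℳ` is a grading of the `R`-module `M`, compatible with `𝒜`, with finite-dimensional components. -/
structure ModuleGrading (𝒜 : ℕ → Submodule k R) {M : Type u} [AddCommGroup M] [Module R M]
    [Module k M] (ℳ : ℕ → Submodule k M) : Prop where
  isInternal : IsInternal ℳ
  smul_mem : ∀ i j (r : R) (x : M), r ∈ 𝒜 i → x ∈ ℳ j → r • x ∈ ℳ (i + j)
  finiteDimensional : ∀ n, FiniteDimensional k (ℳ n)

section Swap

variable (k R) (M : Type u) [AddCommGroup M] [Module R M] [Module k M] [IsScalarTower k R M]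

/-- The `k`-linear involution `x ⊗ y ↦ y ⊗ x` of `M ⊗[R] M`. -/
noncomputable def swapMap : M ⊗[R] M →ₗ[k] M ⊗[R] M :=
  (TensorProduct.comm R M M).toLinearMap.restrictScalars k

variable {M}

@[simp]
theorem swapMap_tmul (x y : M) : swapMap k R M (x ⊗ₜ y) = y ⊗ₜ x := rfl

theorem swapMap_swapMap (z : M ⊗[R] M) : swapMap k R M (swapMap k R M z) = z := by
  induction z using TensorProduct.induction_on with
  | zero => simp
  | tmul x y => rfl
  | add x y hx hy => rw [map_add, map_add, hx, hy]

theorem swapMap_mem {ℳ : ℕ → Submodule k M} {n : ℕ} {z : M ⊗[R] M}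
    (hz : z ∈ tensorGrading R ℳ ℳ n) : swapMap k R M z ∈ tensorGrading R ℳ ℳ n := by
  have : tensorGrading R ℳ ℳ n ≤ (tensorGrading R ℳ ℳ n).comap (swapMap k R M) :=
    tensorGrading_le fun i j hij x hx y hy => tmul_mem_tensorGrading (by omega) hy hx
  exact this hz

/-- The Hilbert series of `M ⊗[R] M`. -/
noncomputable def tensorSeries {M : Type u} [AddCommGroup M] [Module R M] [Module k M] [IsScalarTower k R M]
    (ℳ : ℕ → Submodule k M) : PowerSeries ℚ :=
  hilbertSeries (tensorGrading R ℳ ℳ)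

/-- The Hilbert series of the antisymmetric part of `M ⊗[R] M`, i.e. of the image of `id - swap`. -/
noncomputable def antisymSeries {M : Type u} [AddCommGroup M] [Module R M] [Module k M] [IsScalarTower k R M]
    (ℳ : ℕ → Submodule k M) : PowerSeries ℚ :=
  hilbertSeries fun n => (tensorGrading R ℳ ℳ n).map (LinearMap.id - swapMap k R M)

end Swap

variable {M F : Type u} [AddCommGroup M] [Module R M] [Module k M] [IsScalarTower k R M]
  [AddCommGroup F] [Module R F] [Module k F] [IsScalarTower k R F]

/-- The grading induced on the kernel of `f` by the grading of its source. -/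
def kerGrading (f : F →ₗ[R] M) (ℱ : ℕ → Submodule k F) (n : ℕ) :
    Submodule k (LinearMap.ker f) :=
  (ℱ n).comap ((LinearMap.ker f).subtype.restrictScalars k)

theorem kerGrading_moduleGrading {f : F →ₗ[R] M} {ℱ : ℕ → Submodule k F}
    {ℳ : ℕ → Submodule k M} (hF : ModuleGrading 𝒜 ℱ) (hM : ModuleGrading 𝒜 ℳ)
    (hf : ∀ n, (ℱ n).map (f.restrictScalars k) = ℳ n) :
    ModuleGrading 𝒜 (kerGrading f ℱ) where
  isInternal := isInternal_ker hF.isInternal hM.isInternal (f.restrictScalars k)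
    (fun n x hx => hf n ▸ ⟨x, hx, rfl⟩) _ Subtype.val_injective (by
      ext x
      simp)
  smul_mem i j r x hr hx := hF.smul_mem i j r x hr hx
  finiteDimensional n := by
    have := hF.finiteDimensional n
    exact Module.Finite.of_injective
      (((LinearMap.ker f).subtype.restrictScalars k).restrict (p := kerGrading f ℱ n) (q := ℱ n)
        fun x hx => hx) fun x y h => Subtype.ext (Subtype.ext (congrArg (fun z => z.1) h))

theorem finrank_kerGrading {f : F →ₗ[R] M} {ℱ : ℕ → Submodule k F}
    {ℳ : ℕ → Submodule k M} (hF : ModuleGrading 𝒜 ℱ)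
    (hf : ∀ n, (ℱ n).map (f.restrictScalars k) = ℳ n) (n : ℕ) :
    Module.finrank k (kerGrading f ℱ n) + Module.finrank k (ℳ n) = Module.finrank k (ℱ n) := by
  have := hF.finiteDimensional n
  rw [← finrank_map_add_inf_ker (f.restrictScalars k) (ℱ n), hf, add_comm]
  congr 1
  let j : LinearMap.ker f →ₗ[k] F := (LinearMap.ker f).subtype.restrictScalars k
  have h1 : (kerGrading f ℱ n).map j = ℱ n ⊓ LinearMap.ker (f.restrictScalars k) := by
    ext x
    constructor
    · rintro ⟨y, hy, rfl⟩
      exact ⟨hy, y.2⟩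
    · rintro ⟨hx, hx'⟩
      exact ⟨⟨x, hx'⟩, hx, rfl⟩
  rw [← h1]
  exact (LinearEquiv.finrank_eq (Submodule.equivMapOfInjective j Subtype.val_injective _))

theorem tensorGrading_map {f : F →ₗ[R] M} {ℱ : ℕ → Submodule k F} {ℳ : ℕ → Submodule k M}
    (hf : ∀ n, (ℱ n).map (f.restrictScalars k) = ℳ n) (n : ℕ) :
    (tensorGrading R ℱ ℱ n).map ((TensorProduct.map f f).restrictScalars k) =
      tensorGrading R ℳ ℳ n := by
  apply le_antisymm
  · rw [Submodule.map_le_iff_le_comap]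
    refine tensorGrading_le fun i j hij x hx y hy => ?_
    exact tmul_mem_tensorGrading hij (hf i ▸ ⟨x, hx, rfl⟩) (hf j ▸ ⟨y, hy, rfl⟩)
  · refine tensorGrading_le fun i j hij x hx y hy => ?_
    rw [← hf] at hx hy
    obtain ⟨x, hx, rfl⟩ := hx
    obtain ⟨y, hy, rfl⟩ := hy
    exact ⟨x ⊗ₜ y, tmul_mem_tensorGrading hij hx hy, rfl⟩

/-- The map `N ⊗ F → F ⊗ F` for `N = ker f`, as a `k`-linear map. -/
noncomputable abbrev kerTensorFree (k : Type u) [Field k] [Algebra k R] [Module k M] [IsScalarTower k R M]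
    [Module k F] [IsScalarTower k R F] (f : F →ₗ[R] M) : LinearMap.ker f ⊗[R] F →ₗ[k] F ⊗[R] F :=
  ((LinearMap.ker f).subtype.rTensor F).restrictScalars k

/-- The map `N ⊗ N → F ⊗ F` for `N = ker f`, as a `k`-linear map. -/
noncomputable abbrev kerTensorKer (k : Type u) [Field k] [Algebra k R] [Module k M] [IsScalarTower k R M]
    [Module k F] [IsScalarTower k R F] (f : F →ₗ[R] M) :
    LinearMap.ker f ⊗[R] LinearMap.ker f →ₗ[k] F ⊗[R] F :=
  (TensorProduct.map (LinearMap.ker f).subtype (LinearMap.ker f).subtype).restrictScalars k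

theorem swapMap_kerTensorFree (f : F →ₗ[R] M) (y : F ⊗[R] LinearMap.ker f) :
    swapMap k R F (kerTensorFree k f (TensorProduct.comm R _ _ y)) =
      (LinearMap.ker f).subtype.lTensor F y := by
  induction y using TensorProduct.induction_on with
  | zero => simp
  | tmul x y => rfl
  | add x y hx hy => rw [map_add, map_add, map_add, map_add, hx, hy]

theorem kerTensorKer_swapMap (f : F →ₗ[R] M) (y : LinearMap.ker f ⊗[R] LinearMap.ker f) :
    swapMap k R F (kerTensorKer k f y) = kerTensorKer k f (swapMap k R _ y) := by
  induction y using TensorProduct.induction_on with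
  | zero => simp
  | tmul x y => rfl
  | add x y hx hy => rw [map_add, map_add, map_add, map_add, hx, hy]

variable {f : F →ₗ[R] M} {ℱ : ℕ → Submodule k F} {ℳ : ℕ → Submodule k M}

theorem kerTensorFree_mem {n : ℕ} {x : LinearMap.ker f ⊗[R] F}
    (hx : x ∈ tensorGrading R (kerGrading f ℱ) ℱ n) :
    kerTensorFree k f x ∈ tensorGrading R ℱ ℱ n := by
  have : tensorGrading R (kerGrading f ℱ) ℱ n ≤
      (tensorGrading R ℱ ℱ n).comap (kerTensorFree k f) :=
    tensorGrading_le fun i j hij x hx y hy =>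
      tmul_mem_tensorGrading (𝒱 := ℱ) (𝒲 := ℱ) (x := x.1) hij hx hy
  exact this hx

theorem kerTensorKer_mem {n : ℕ} {x : LinearMap.ker f ⊗[R] LinearMap.ker f}
    (hx : x ∈ tensorGrading R (kerGrading f ℱ) (kerGrading f ℱ) n) :
    kerTensorKer k f x ∈ tensorGrading R ℱ ℱ n := by
  have : tensorGrading R (kerGrading f ℱ) (kerGrading f ℱ) n ≤
      (tensorGrading R ℱ ℱ n).comap (kerTensorKer k f) :=
    tensorGrading_le fun i j hij x hx y hy =>
      tmul_mem_tensorGrading (𝒱 := ℱ) (𝒲 := ℱ) (x := x.1) (y := y.1) hij hx hy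
  exact this hx

/-- In each degree, the kernel of `F ⊗ F → M ⊗ M` is `N ⊗ F + F ⊗ N`, where `N = ker f`. -/
theorem tensorGrading_inf_ker (hF : IsInternal ℱ) (hN : IsInternal (kerGrading f ℱ))
    (hFF : IsInternal (tensorGrading R ℱ ℱ)) (hf : Function.Surjective f) (n : ℕ) :
    tensorGrading R ℱ ℱ n ⊓ LinearMap.ker ((TensorProduct.map f f).restrictScalars k) =
      (tensorGrading R (kerGrading f ℱ) ℱ n).map (kerTensorFree k f) ⊔
      ((tensorGrading R (kerGrading f ℱ) ℱ n).map (kerTensorFree k f)).map (swapMap k R F) := by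
  have hex : Function.Exact (LinearMap.ker f).subtype f := LinearMap.exact_subtype_ker_map f
  have hker := TensorProduct.map_ker hex hf hex hf
  apply le_antisymm
  · rintro z ⟨hz, hz'⟩
    have hz'' : z ∈ LinearMap.ker (TensorProduct.map f f) := hz'
    rw [hker] at hz''
    obtain ⟨_, ⟨y, rfl⟩, _, ⟨x, rfl⟩, rfl⟩ := Submodule.mem_sup.1 hz''
    obtain ⟨p, p1, p2⟩ := exists_preimage_of_graded
      (iSup_tensorGrading (R := R) hN.submodule_iSup_eq_top hF.submodule_iSup_eq_top) hFF
    rw [← p1 n _ hz, map_add, add_comm]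
    refine Submodule.add_mem_sup (p2 (kerTensorFree k f) (fun n x hx => kerTensorFree_mem hx) n x) ?_
    rw [← Submodule.map_comp, ← swapMap_kerTensorFree (k := k)]
    exact p2 (swapMap k R F ∘ₗ kerTensorFree k f)
      (fun n x hx => swapMap_mem k R (kerTensorFree_mem hx)) n _
  · rw [sup_le_iff]
    have h1 : (tensorGrading R (kerGrading f ℱ) ℱ n).map (kerTensorFree k f) ≤
        LinearMap.ker ((TensorProduct.map f f).restrictScalars k) := by
      rintro _ ⟨x, -, rfl⟩
      have : kerTensorFree k f x ∈ LinearMap.ker (TensorProduct.map f f) := by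
        rw [hker]
        exact Submodule.mem_sup_right ⟨x, rfl⟩
      exact this
    refine ⟨le_inf ?_ h1, le_inf ?_ ?_⟩
    · rintro _ ⟨x, hx, rfl⟩
      exact kerTensorFree_mem hx
    · rintro _ ⟨_, ⟨x, hx, rfl⟩, rfl⟩
      exact swapMap_mem k R (kerTensorFree_mem hx)
    · rintro _ ⟨_, ⟨x, hx, rfl⟩, rfl⟩
      have : swapMap k R F (kerTensorFree k f x) ∈ LinearMap.ker (TensorProduct.map f f) := by
        rw [hker]
        refine Submodule.mem_sup_left ⟨TensorProduct.comm R _ _ x, ?_⟩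
        rw [← swapMap_kerTensorFree (k := k)]
        congr 2
        exact (TensorProduct.comm R _ _).symm_apply_apply x
      exact this

/-- In each degree, the images of `N ⊗ F` and `F ⊗ N` in `F ⊗ F` meet in the image of `N ⊗ N`, because
`Tor_1(M, M) = 0`. -/
theorem kerTensorFree_inf_swap (hN : IsInternal (kerGrading f ℱ))
    (hFF : IsInternal (tensorGrading R ℱ ℱ)) (hf : Function.Surjective f) [Module.Flat R F]
    (htor : TorOneVanishes R M M) (n : ℕ) :
    (tensorGrading R (kerGrading f ℱ) ℱ n).map (kerTensorFree k f) ⊓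
      ((tensorGrading R (kerGrading f ℱ) ℱ n).map (kerTensorFree k f)).map (swapMap k R F) =
      (tensorGrading R (kerGrading f ℱ) (kerGrading f ℱ) n).map (kerTensorKer k f) := by
  have hle : (tensorGrading R (kerGrading f ℱ) (kerGrading f ℱ) n).map (kerTensorKer k f) ≤
      (tensorGrading R (kerGrading f ℱ) ℱ n).map (kerTensorFree k f) := by
    rw [Submodule.map_le_iff_le_comap]
    exact tensorGrading_le fun i j hij x hx y hy =>
      ⟨x ⊗ₜ y.1, tmul_mem_tensorGrading hij hx hy, rfl⟩
  apply le_antisymm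
  · rintro _ ⟨⟨x, hx, rfl⟩, _, ⟨x', hx', rfl⟩, hxx'⟩
    have h1 : kerTensorFree k f x =
        (LinearMap.ker f).subtype.lTensor F (TensorProduct.comm R _ _ x') := by
      rw [← hxx', ← swapMap_kerTensorFree (k := k)]
      congr 2
      exact ((TensorProduct.comm R _ _).symm_apply_apply x').symm
    obtain ⟨w, rfl, -⟩ := exists_common_lift f f hf (htor F f hf) x _ h1
    obtain ⟨p, p1, p2⟩ := exists_preimage_of_graded
      (iSup_tensorGrading (R := R) hN.submodule_iSup_eq_top hN.submodule_iSup_eq_top) hFF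
    have h2 : kerTensorFree k f ((LinearMap.ker f).subtype.lTensor _ w) = kerTensorKer k f w := by
      change ((LinearMap.ker f).subtype.rTensor F ∘ₗ (LinearMap.ker f).subtype.lTensor _) w = _
      rw [LinearMap.rTensor_comp_lTensor]
      rfl
    rw [← p1 n _ (kerTensorFree_mem hx), h2]
    exact p2 _ (fun n x hx => kerTensorKer_mem hx) n w
  · refine le_inf hle ?_
    rintro _ ⟨w, hw, rfl⟩
    refine ⟨_, hle ⟨_, swapMap_mem k R hw, rfl⟩, ?_⟩
    rw [← kerTensorKer_swapMap, swapMap_swapMap]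

/-- `N ⊗ N → F ⊗ F` is injective, because `Tor_1(N, M) = 0`. -/
theorem kerTensorKer_injective [Module.Flat R F] (hf : Function.Surjective f)
    (h : TorOneVanishes R (LinearMap.ker f) M) : Function.Injective (kerTensorKer k f) := by
  have h1 := h.symm F f hf
  rw [← LinearMap.lTensor_inj_iff_rTensor_inj] at h1
  have h2 := Module.Flat.rTensor_preserves_injective_linearMap (M := F) _
    (LinearMap.ker f).injective_subtype
  have h3 := h2.comp h1
  rw [← LinearMap.coe_comp, LinearMap.rTensor_comp_lTensor] at h3
  exact h3

end Syzygy

/-! ### Hilbert series attached to a free module -/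

section FreeSeries

variable {k R : Type u} [Field k] [CommRing R] [Algebra k R] {𝒜 : ℕ → Submodule k R}
  {F : Type u} [AddCommGroup F] [Module R F] [Module k F] [IsScalarTower k R F]
  {ι : Type u} (b : Module.Basis ι R F) {db : ι → ℕ}

theorem moduleGrading_freeGrading (hA : ConnectedGrading 𝒜) (hdb : ∀ n, Finite {i // db i = n}) :
    ModuleGrading 𝒜 (freeGrading 𝒜 b db) := by
  obtain ⟨κ, ρ, dρ, hρ⟩ := exists_homBasis hA.isInternal
  have hF := isHomBasis_freeGrading b (db := db) hρ
  refine ⟨hF.isInternal, smul_mem_freeGrading b hA.mul_mem, fun n => ?_⟩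
  have := finite_fiber_add (hρ.finite_fiber hA.finiteDimensional) hdb n
  exact hF.finiteDimensional n

theorem hilbertSeries_freeGrading (hA : ConnectedGrading 𝒜) (hdb : ∀ n, Finite {i // db i = n}) :
    hilbertSeries (freeGrading 𝒜 b db) = hilbertSeries 𝒜 * countSeries db := by
  obtain ⟨κ, ρ, dρ, hρ⟩ := exists_homBasis hA.isInternal
  rw [(isHomBasis_freeGrading b hρ).hilbertSeries_eq, hρ.hilbertSeries_eq,
    countSeries_add (hρ.finite_fiber hA.finiteDimensional) hdb]

theorem hilbertSeriesSq_freeGrading (hA : ConnectedGrading 𝒜)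
    (hdb : ∀ n, Finite {i // db i = n}) :
    hilbertSeriesSq (freeGrading 𝒜 b db) =
      hilbertSeriesSq 𝒜 * countSeries fun i => 2 * db i := by
  obtain ⟨κ, ρ, dρ, hρ⟩ := exists_homBasis hA.isInternal
  rw [(isHomBasis_freeGrading b hρ).hilbertSeriesSq_eq, hρ.hilbertSeriesSq_eq,
    ← countSeries_add (finite_fiber_two_mul (hρ.finite_fiber hA.finiteDimensional)) (finite_fiber_two_mul hdb)]
  simp only [mul_add]

theorem hilbertSeries_tensor_freeGrading {N : Type u} [AddCommGroup N] [Module R N] [Module k N]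
    [IsScalarTower k R N] {𝒩 : ℕ → Submodule k N} (hA : ConnectedGrading 𝒜)
    (hN : ModuleGrading 𝒜 𝒩) (hdb : ∀ n, Finite {i // db i = n}) :
    hilbertSeries (tensorGrading R 𝒩 (freeGrading 𝒜 b db)) =
      hilbertSeries 𝒩 * countSeries db := by
  obtain ⟨α, a, da, ha⟩ := exists_homBasis hN.isInternal
  obtain ⟨c, hc⟩ := exists_tensor_basis a b
  rw [(isHomBasis_tensorGrading b ha hN.smul_mem hA.one_mem hc).hilbertSeries_eq,
    ha.hilbertSeries_eq, countSeries_add (ha.finite_fiber hN.finiteDimensional) hdb]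

theorem isInternal_tensor_freeGrading {N : Type u} [AddCommGroup N] [Module R N] [Module k N]
    [IsScalarTower k R N] {𝒩 : ℕ → Submodule k N} (hA : ConnectedGrading 𝒜)
    (hN : ModuleGrading 𝒜 𝒩) : IsInternal (tensorGrading R 𝒩 (freeGrading 𝒜 b db)) := by
  obtain ⟨α, a, da, ha⟩ := exists_homBasis hN.isInternal
  obtain ⟨c, hc⟩ := exists_tensor_basis a b
  exact (isHomBasis_tensorGrading b ha hN.smul_mem hA.one_mem hc).isInternal

/-- For a free module `F` with basis `b`, the swap permutes the basis `r b_i ⊗ b_j` of `F ⊗ F` (`r` in a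
homogeneous basis of `R`); its fixed points `r b_i ⊗ b_i` have degrees `deg r + 2 deg b_i`. -/
theorem antisymSeries_freeGrading (hA : ConnectedGrading 𝒜) (hdb : ∀ n, Finite {i // db i = n}) :
    2 * antisymSeries k R (freeGrading 𝒜 b db) +
        hilbertSeries 𝒜 * (countSeries fun i => 2 * db i) =
      tensorSeries k R (freeGrading 𝒜 b db) := by
  obtain ⟨κ, ρ, dρ, hρ⟩ := exists_homBasis hA.isInternal
  have hρf := hρ.finite_fiber hA.finiteDimensional
  have hF := isHomBasis_freeGrading b (db := db) hρ
  obtain ⟨c, hc⟩ := exists_tensor_basis (ρ.smulTower b) b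
  have hFF := isHomBasis_tensorGrading b (db := db) hF (smul_mem_freeGrading b hA.mul_mem)
    hA.one_mem hc
  -- an arbitrary linear order on the index set picks one of `(i, j)` and `(j, i)` when `i ≠ j`
  let r : ι → ι → Prop := WellOrderingRel
  have hrr : ∀ i j, r i j → ¬ r j i := fun i j h h' => asymm_of r h h'
  have hrt : ∀ i j, r i j ∨ i = j ∨ r j i := fun i j => trichotomous_of r i j
  let τ : (κ × ι) × ι → (κ × ι) × ι := fun x => ((x.1.1, x.2), x.1.2)
  have hfix : ∀ x, τ x = x ↔ x.1.2 = x.2 := by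
    rintro ⟨⟨l, i⟩, j⟩
    simp only [τ, Prod.mk.injEq]
    grind
  ext n
  have key := finrank_antisymmetric_of_basis hFF
    (finite_fiber_add (finite_fiber_add hρf hdb) hdb) (swapMap k R F) τ
    (by
      rintro ⟨⟨l, i⟩, j⟩
      rw [hc, swapMap_tmul, hc, Module.Basis.smulTower_apply, Module.Basis.smulTower_apply,
        TensorProduct.tmul_smul, ← TensorProduct.smul_tmul'])
    (fun x => rfl) (fun x => by simp only [τ]; omega) (fun x => r x.1.2 x.2)
    (by
      rintro ⟨⟨l, i⟩, j⟩
      have h1 := hrr i j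
      have h2 := hrt i j
      have h3 := hrr j i
      rw [ne_eq, hfix]
      simp only [τ]
      grind) n
  have hcard : hilbertSeries 𝒜 * (countSeries fun i => 2 * db i) =
      countSeries fun p : κ × ι => dρ p.1 + 2 * db p.2 := by
    rw [hρ.hilbertSeries_eq, ← countSeries_add hρf (finite_fiber_two_mul hdb)]
  have hcard' : Nat.card {x : (κ × ι) × ι // dρ x.1.1 + db x.1.2 + db x.2 = n ∧ τ x = x} =
      Nat.card {p : κ × ι // dρ p.1 + 2 * db p.2 = n} :=
    Nat.card_congr
      { toFun := fun x => ⟨x.1.1, by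
          have h1 := x.2.1
          have h2 := (hfix _).1 x.2.2
          rw [← h2] at h1
          omega⟩
        invFun := fun p => ⟨(p.1, p.1.2), by
          have := p.2
          exact ⟨by dsimp only; omega, rfl⟩⟩
        left_inv := fun x => Subtype.ext (Prod.ext rfl ((hfix _).1 x.2.2))
        right_inv := fun p => rfl }
  rw [hcard'] at key
  rw [hcard, show (2 : PowerSeries ℚ) = PowerSeries.C 2 from (map_ofNat _ 2).symm, map_add, PowerSeries.coeff_C_mul]
  simp only [antisymSeries, tensorSeries, hilbertSeries, countSeries, PowerSeries.coeff_mk]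
  exact_mod_cast key

end FreeSeries

/-! ### Passing from a module to its syzygy -/

section Recurrences

variable {k R : Type u} [Field k] [CommRing R] [Algebra k R] {𝒜 : ℕ → Submodule k R}
  {M : Type u} [AddCommGroup M] [Module R M] [Module k M] [IsScalarTower k R M]
  {ℳ : ℕ → Submodule k M}

/-- The first syzygy `N` of `M`, taken with respect to the free module on a homogeneous `k`-basis of
`M`, again has no self-`Tor`, and its Hilbert series are determined by those of `M`. This cover is far from
minimal, but its degrees are those of `M` itself, so that `H_F = H_R H_M`. -/
theorem exists_syzygy (h2 : (2 : k) ≠ 0) (hA : ConnectedGrading 𝒜) (hM : ModuleGrading 𝒜 ℳ)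
    (htor : ∀ n, TorVanishes R n M M) :
    ∃ (N : Type u) (_ : AddCommGroup N) (_ : Module R N) (_ : Module k N)
      (_ : IsScalarTower k R N) (𝒩 : ℕ → Submodule k N),
      ModuleGrading 𝒜 𝒩 ∧ (∀ n, TorVanishes R n N N) ∧
      hilbertSeries 𝒩 + hilbertSeries ℳ = hilbertSeries 𝒜 * hilbertSeries ℳ ∧
      hilbertSeriesSq 𝒩 + hilbertSeriesSq ℳ = hilbertSeriesSq 𝒜 * hilbertSeriesSq ℳ ∧
      tensorSeries k R ℳ + 2 * (hilbertSeries 𝒩 * hilbertSeries ℳ) =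
        hilbertSeries 𝒜 * hilbertSeries ℳ ^ 2 + tensorSeries k R 𝒩 ∧
      2 * (antisymSeries k R ℳ + hilbertSeries 𝒩 * hilbertSeries ℳ + antisymSeries k R 𝒩) +
          hilbertSeries 𝒜 * hilbertSeriesSq ℳ =
        hilbertSeries 𝒜 * hilbertSeries ℳ ^ 2 + 2 * tensorSeries k R 𝒩 := by
  obtain ⟨ι, e, de, he⟩ := exists_homBasis hM.isInternal
  have hde := he.finite_fiber hM.finiteDimensional
  obtain ⟨F, _, _, _, _, b, f, hfb'⟩ : ∃ (F : Type u) (_ : AddCommGroup F) (_ : Module R F)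
      (_ : Module k F) (_ : IsScalarTower k R F) (b : Module.Basis ι R F) (f : F →ₗ[R] M),
      ∀ i, f (b i) = e i :=
    ⟨ι →₀ R, inferInstance, inferInstance, inferInstance, inferInstance, Finsupp.basisSingleOne,
      Finsupp.linearCombination R e, fun i => by
        rw [show (Finsupp.basisSingleOne : Module.Basis ι R (ι →₀ R)) i = Finsupp.single i 1 from
          congrFun Finsupp.coe_basisSingleOne i, Finsupp.linearCombination_single, one_smul]⟩
  have hfb : ∀ (r : R) i, f (r • b i) = r • e i := fun r i => by rw [map_smul, hfb']
  have hfree : Module.Free R F := Module.Free.of_basis b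
  let ℱ := freeGrading 𝒜 b de
  have hF : ModuleGrading 𝒜 ℱ := moduleGrading_freeGrading b hA hde
  have hfℱ : ∀ n, (ℱ n).map (f.restrictScalars k) = ℳ n := by
    intro n
    apply le_antisymm
    · rw [Submodule.map_le_iff_le_comap]
      refine freeGrading_le b fun m i hm r hr => ?_
      change f (r • b i) ∈ ℳ n
      rw [hfb, ← hm]
      exact hM.smul_mem _ _ _ _ hr (he.mem i)
    · rw [he n, Submodule.span_le]
      rintro _ ⟨i, hi, rfl⟩
      refine ⟨(1 : R) • b i, smul_basis_mem_freeGrading b (m := 0) ?_ hA.one_mem, ?_⟩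
      · have : de i = n := hi
        omega
      · exact (hfb 1 i).trans (one_smul R _)
  have hf : Function.Surjective f := by
    rw [← LinearMap.range_eq_top, eq_top_iff]
    rintro x -
    have hx : x ∈ Submodule.span k (Set.range e) := e.span_eq ▸ Submodule.mem_top
    have hle : Submodule.span k (Set.range e) ≤ (LinearMap.range f).restrictScalars k := by
      rw [Submodule.span_le]
      rintro _ ⟨i, rfl⟩
      exact ⟨(1 : R) • b i, (hfb 1 i).trans (one_smul R _)⟩
    exact hle hx
  let 𝒩 := kerGrading f ℱ
  have hN : ModuleGrading 𝒜 𝒩 := kerGrading_moduleGrading hF hM hfℱ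
  have htorNM : ∀ n, TorVanishes R n (LinearMap.ker f) M := fun n => htor (n + 1) F f hf
  -- two dimension shifts, one in each argument
  have htorNN : ∀ n, TorVanishes R n (LinearMap.ker f) (LinearMap.ker f) := fun n =>
    (TorVanishes.symm (n + 1) (htorNM (n + 1))) F f hf
  have hMs : hilbertSeries ℳ = countSeries de := he.hilbertSeries_eq
  have hMsq : hilbertSeriesSq ℳ = countSeries fun i => 2 * de i := he.hilbertSeriesSq_eq
  have hFM : hilbertSeries ℱ = hilbertSeries 𝒜 * hilbertSeries ℳ := by
    rw [hMs]; exact hilbertSeries_freeGrading b hA hde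
  have hFMsq : hilbertSeriesSq ℱ = hilbertSeriesSq 𝒜 * hilbertSeriesSq ℳ := by
    rw [hMsq]; exact hilbertSeriesSq_freeGrading b hA hde
  have hNF : hilbertSeries (tensorGrading R 𝒩 ℱ) = hilbertSeries 𝒩 * hilbertSeries ℳ := by
    rw [hMs]; exact hilbertSeries_tensor_freeGrading b hA hN hde
  have hFF : tensorSeries k R ℱ = hilbertSeries 𝒜 * hilbertSeries ℳ ^ 2 := by
    rw [tensorSeries, show hilbertSeries (tensorGrading R ℱ ℱ) = _ from
      hilbertSeries_tensor_freeGrading b hA hF hde, ← hMs, hFM, sq, mul_assoc]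
  have haF : 2 * antisymSeries k R ℱ + hilbertSeries 𝒜 * hilbertSeriesSq ℳ =
      tensorSeries k R ℱ := by
    rw [hMsq]; exact antisymSeries_freeGrading b hA hde
  have hrank := finrank_kerGrading hF hfℱ
  have hFFint : IsInternal (tensorGrading R ℱ ℱ) := isInternal_tensor_freeGrading b hA hF
  have hFd := hF.finiteDimensional
  have hNd := hN.finiteDimensional
  let π : F ⊗[R] F →ₗ[k] M ⊗[R] M := (TensorProduct.map f f).restrictScalars k
  have hπ : ∀ x, π (swapMap k R F x) = swapMap k R M (π x) := by
    intro x
    induction x using TensorProduct.induction_on with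
    | zero => simp
    | tmul x y => rfl
    | add x y hx hy => rw [map_add, map_add, map_add, map_add, hx, hy]
  have hW : ∀ n, (tensorGrading R ℱ ℱ n).map π = tensorGrading R ℳ ℳ n := tensorGrading_map hfℱ
  have hK := tensorGrading_inf_ker hF.isInternal hN.isInternal hFFint hf
  have hZ := kerTensorFree_inf_swap hN.isInternal hFFint hf (htor 0)
  have hinj : Function.Injective (kerTensorKer k f) := kerTensorKer_injective hf (htorNM 0)
  have hinj' : Function.Injective (kerTensorFree k f) :=
    Module.Flat.rTensor_preserves_injective_linearMap (M := F) _
      (LinearMap.ker f).injective_subtype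
  have hKrank : ∀ n, Module.finrank k ((tensorGrading R 𝒩 ℱ n).map (kerTensorFree k f)) =
      Module.finrank k (tensorGrading R 𝒩 ℱ n) := fun n =>
    (LinearEquiv.finrank_eq (Submodule.equivMapOfInjective _ hinj' _)).symm
  have hZrank : ∀ n, Module.finrank k ((tensorGrading R 𝒩 𝒩 n).map (kerTensorKer k f)) =
      Module.finrank k (tensorGrading R 𝒩 𝒩 n) := fun n =>
    (LinearEquiv.finrank_eq (Submodule.equivMapOfInjective _ hinj _)).symm
  have hZrank' : ∀ n, Module.finrank k (((tensorGrading R 𝒩 𝒩 n).map (kerTensorKer k f)).map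
      (LinearMap.id - swapMap k R F)) = Module.finrank k ((tensorGrading R 𝒩 𝒩 n).map
        (LinearMap.id - swapMap k R (LinearMap.ker f))) := by
    intro n
    rw [← Submodule.map_comp]
    have : (LinearMap.id - swapMap k R F) ∘ₗ kerTensorKer k f =
        kerTensorKer k f ∘ₗ (LinearMap.id - swapMap k R (LinearMap.ker f)) := by
      ext x
      simp only [LinearMap.comp_apply, LinearMap.sub_apply, LinearMap.id_apply, map_sub,
        kerTensorKer_swapMap]
    rw [this, Submodule.map_comp]
    exact (LinearEquiv.finrank_eq (Submodule.equivMapOfInjective _ hinj _)).symm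
  have hX : tensorSeries k R ℳ + 2 * (hilbertSeries 𝒩 * hilbertSeries ℳ) =
      tensorSeries k R ℱ + tensorSeries k R 𝒩 := by
    rw [← hNF]
    ext n
    have key := finrank_quotient_recursion (swapMap k R F) (swapMap_swapMap k R) π
      (tensorGrading R ℱ ℱ n) _ _ (hK n) (hZ n)
    rw [hW, hKrank, hZrank] at key
    rw [show (2 : PowerSeries ℚ) = PowerSeries.C 2 from (map_ofNat _ 2).symm, map_add, map_add,
      PowerSeries.coeff_C_mul]
    simp only [tensorSeries, hilbertSeries, PowerSeries.coeff_mk]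
    exact_mod_cast key
  have ha : antisymSeries k R ℳ + hilbertSeries 𝒩 * hilbertSeries ℳ + antisymSeries k R 𝒩 =
      antisymSeries k R ℱ + tensorSeries k R 𝒩 := by
    rw [← hNF]
    ext n
    have key := finrank_antisymmetric_recursion h2 (swapMap k R F) (swapMap_swapMap k R)
      (swapMap k R M) π hπ (tensorGrading R ℱ ℱ n) _ _ (fun x hx => swapMap_mem k R hx)
      (hK n) (hZ n)
    rw [hW, hKrank, hZrank, hZrank'] at key
    simp only [map_add, antisymSeries, tensorSeries, hilbertSeries, PowerSeries.coeff_mk]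
    exact_mod_cast key
  refine ⟨LinearMap.ker f, inferInstance, inferInstance, inferInstance, inferInstance, 𝒩, hN,
    htorNN, ?_, ?_, by rw [hX, hFF], ?_⟩
  · rw [← hFM]
    ext n
    simp only [map_add, hilbertSeries, PowerSeries.coeff_mk]
    exact_mod_cast hrank n
  · rw [← hFMsq]
    ext n
    simp only [map_add, hilbertSeriesSq, PowerSeries.coeff_mk]
    split_ifs
    · exact_mod_cast hrank (n / 2)
    · simp
  · rw [ha, ← hFF]
    linear_combination haF

end Recurrences

/-! ### The two Hilbert series identities -/

section Induction

variable {k R : Type u} [Field k] [CommRing R] [Algebra k R] {𝒜 : ℕ → Submodule k R}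

/-- If `M` vanishes in degrees below `m`, then so do `M ⊗ M` and its antisymmetric part, and
`H_M(t²)` has order at least `m`. -/
theorem series_dvd_of_dvd {M : Type u} [AddCommGroup M] [Module R M] [Module k M]
    [IsScalarTower k R M] {ℳ : ℕ → Submodule k M} (hM : ModuleGrading 𝒜 ℳ) {m : ℕ}
    (h : (PowerSeries.X : PowerSeries ℚ) ^ m ∣ hilbertSeries ℳ) :
    PowerSeries.X ^ m ∣ hilbertSeriesSq ℳ ∧ PowerSeries.X ^ m ∣ tensorSeries k R ℳ ∧
      PowerSeries.X ^ m ∣ antisymSeries k R ℳ := by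
  simp only [PowerSeries.X_pow_dvd_iff] at h ⊢
  have hbot : ∀ i < m, ℳ i = ⊥ := fun i hi => by
    have := hM.finiteDimensional i
    have h1 := h i hi
    rw [hilbertSeries, PowerSeries.coeff_mk] at h1
    exact Submodule.finrank_eq_zero.1 (by exact_mod_cast h1)
  have htens : ∀ n < m, tensorGrading R ℳ ℳ n = ⊥ := fun n hn => by
    rw [eq_bot_iff]
    refine tensorGrading_le fun i j hij x hx y hy => ?_
    rw [hbot i (by omega), Submodule.mem_bot] at hx
    rw [hx, TensorProduct.zero_tmul]
    exact Submodule.zero_mem _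
  refine ⟨fun n hn => ?_, fun n hn => ?_, fun n hn => ?_⟩
  · rw [hilbertSeriesSq, PowerSeries.coeff_mk, hbot (n / 2) (by omega)]
    simp
  · rw [tensorSeries, hilbertSeries, PowerSeries.coeff_mk, htens n hn]
    simp
  · rw [antisymSeries, hilbertSeries, PowerSeries.coeff_mk, htens n hn]
    simp

theorem X_dvd_hilbertSeries_sub_one (hA : ConnectedGrading 𝒜) :
    (PowerSeries.X : PowerSeries ℚ) ∣ hilbertSeries 𝒜 - 1 := by
  rw [PowerSeries.X_dvd_iff, map_sub, ← PowerSeries.coeff_zero_eq_constantCoeff_apply,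
    hilbertSeries, PowerSeries.coeff_mk, hA.finrank_zero]
  simp

/-- Replacing `M` by its syzygy preserves the first defect `H_R H_{M ⊗ M} - H_M²` and changes the sign of the
second, while it raises the order of `H_M`. After `j` steps the order has grown by `j`, which forces
both defects to be divisible by `X ^ (i + j)`. -/
theorem dvd_euler_defects (h2 : (2 : k) ≠ 0) (hA : ConnectedGrading 𝒜) (j : ℕ) :
    ∀ (m i : ℕ), i + j = m → ∀ (M : Type u) [AddCommGroup M] [Module R M] [Module k M]
      [IsScalarTower k R M] (ℳ : ℕ → Submodule k M), ModuleGrading 𝒜 ℳ →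
      (∀ n, TorVanishes R n M M) → (PowerSeries.X : PowerSeries ℚ) ^ i ∣ hilbertSeries ℳ →
      PowerSeries.X ^ m ∣ hilbertSeries 𝒜 * tensorSeries k R ℳ - hilbertSeries ℳ ^ 2 ∧
      PowerSeries.X ^ m ∣
        hilbertSeriesSq 𝒜 * (tensorSeries k R ℳ - 2 * antisymSeries k R ℳ) -
          hilbertSeries 𝒜 * hilbertSeriesSq ℳ := by
  induction j with
  | zero =>
    rintro m i rfl M _ _ _ _ ℳ hM - hdvd
    obtain ⟨h1, h2, h3⟩ := series_dvd_of_dvd hM hdvd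
    exact ⟨dvd_sub (h2.mul_left _) (hdvd.pow two_ne_zero),
      dvd_sub ((dvd_sub h2 (h3.mul_left _)).mul_left _) (h1.mul_left _)⟩
  | succ j ih =>
    intro m i hij M _ _ _ _ ℳ hM htor hdvd
    obtain ⟨N, _, _, _, _, 𝒩, hN, htorN, e1, e2, e3, e4⟩ := exists_syzygy h2 hA hM htor
    have hNdvd : (PowerSeries.X : PowerSeries ℚ) ^ (i + 1) ∣ hilbertSeries 𝒩 := by
      rw [show hilbertSeries 𝒩 = hilbertSeries ℳ * (hilbertSeries 𝒜 - 1) by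
        linear_combination e1, pow_succ]
      exact mul_dvd_mul hdvd (X_dvd_hilbertSeries_sub_one hA)
    obtain ⟨h1, h2⟩ := ih m (i + 1) (by omega) N 𝒩 hN htorN hNdvd
    refine ⟨?_, ?_⟩
    · convert h1 using 1
      rw [show hilbertSeries 𝒩 = hilbertSeries ℳ * (hilbertSeries 𝒜 - 1) by
        linear_combination e1] at e3 ⊢
      linear_combination hilbertSeries 𝒜 * e3
    · rw [← dvd_neg]
      convert h2 using 1
      linear_combination hilbertSeriesSq 𝒜 * (e4 - e3) + hilbertSeries 𝒜 * e2

theorem eq_zero_of_X_pow_dvd {φ : PowerSeries ℚ} (h : ∀ m, PowerSeries.X ^ m ∣ φ) : φ = 0 := by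
  ext n
  exact PowerSeries.X_pow_dvd_iff.1 (h (n + 1)) n n.lt_succ_self

theorem tensorSeries_formula {M : Type u} [AddCommGroup M] [Module R M] [Module k M]
    [IsScalarTower k R M] {ℳ : ℕ → Submodule k M} (h2 : (2 : k) ≠ 0) (hA : ConnectedGrading 𝒜)
    (hM : ModuleGrading 𝒜 ℳ) (htor : ∀ n, TorVanishes R n M M) :
    hilbertSeries 𝒜 * tensorSeries k R ℳ = hilbertSeries ℳ ^ 2 ∧
    hilbertSeriesSq 𝒜 * (tensorSeries k R ℳ - 2 * antisymSeries k R ℳ) =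
      hilbertSeries 𝒜 * hilbertSeriesSq ℳ :=
  have key := fun m => dvd_euler_defects h2 hA m m 0 (zero_add m) M ℳ hM htor
    (by simp)
  ⟨sub_eq_zero.1 (eq_zero_of_X_pow_dvd fun m => (key m).1),
    sub_eq_zero.1 (eq_zero_of_X_pow_dvd fun m => (key m).2)⟩

end Induction

/-! ### Finite-dimensionality of the graded pieces -/

section Components

variable {k R : Type u} [Field k] [CommRing R] [Algebra k R] {𝒜 : ℕ → Submodule k R}

/-- The components of a finite graded module over a connected Noetherian algebra are
finite-dimensional: a subspace `V` of `M_n` is recovered as the degree `n` part of the submodule it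
generates, so ascending chains in `M_n` stabilize. -/
theorem finiteDimensional_component [IsNoetherianRing R] (hA : IsInternal 𝒜) (h0 : 𝒜 0 = 1)
    {M : Type u} [AddCommGroup M] [Module R M] [Module k M] [IsScalarTower k R M]
    [Module.Finite R M] {ℳ : ℕ → Submodule k M} (hM : IsInternal ℳ)
    (hsm : ∀ i j (r : R) (x : M), r ∈ 𝒜 i → x ∈ ℳ j → r • x ∈ ℳ (i + j)) (n : ℕ) :
    FiniteDimensional k (ℳ n) := by
  obtain ⟨p, p1, p2, -, -⟩ := exists_proj hM
  have key : ∀ V : Submodule k M, V ≤ ℳ n → ∀ x ∈ Submodule.span R (V : Set M), p n x ∈ V := by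
    intro V hV x hx
    -- the condition for all `r` is stable under scalars, as needed for the induction on the span
    suffices h : ∀ r : R, p n (r • x) ∈ V by simpa using h 1
    induction hx using Submodule.span_induction with
    | zero => intro r; simp
    | add x y _ _ hx hy => intro r; rw [smul_add, map_add]; exact V.add_mem (hx r) (hy r)
    | smul s x _ hx => intro r; rw [← mul_smul]; exact hx _
    | mem x hx =>
      intro r
      have hr : r ∈ ⨆ i, 𝒜 i := hA.submodule_iSup_eq_top ▸ Submodule.mem_top
      induction hr using Submodule.iSup_induction' with
      | zero => simp
      | add r s _ _ hr hs => rw [add_smul, map_add]; exact V.add_mem hr hs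
      | mem i r hr =>
        rcases Nat.eq_zero_or_pos i with rfl | hi
        · rw [h0] at hr
          obtain ⟨c, rfl⟩ := Submodule.mem_one.1 hr
          rw [algebraMap_smul, p1 n _ ((ℳ n).smul_mem c (hV hx))]
          exact V.smul_mem c hx
        · rw [p2 (i + n) n (by omega) _ (hsm i n r x hr (hV hx))]
          exact V.zero_mem
  let J : Submodule k (ℳ n) → Submodule R M := fun V =>
    Submodule.span R (V.map (ℳ n).subtype : Set M)
  have hmono : Monotone J := fun V W h => Submodule.span_mono (Submodule.map_mono h)
  have hinj : Function.Injective J := by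
    have h1 : ∀ V W, J V ≤ J W → V ≤ W := by
      intro V W h x hx
      have h2 : (x : M) ∈ J W := h (Submodule.subset_span ⟨x, hx, rfl⟩)
      have h3 := key _ (Submodule.map_subtype_le _ _) _ h2
      rw [p1 n _ x.2] at h3
      obtain ⟨y, hy, hyx⟩ := h3
      rwa [← Subtype.ext hyx]
    exact fun V W h => le_antisymm (h1 V W h.le) (h1 W V h.ge)
  have : WellFoundedGT (Submodule k (ℳ n)) :=
    (hmono.strictMono_of_injective hinj).wellFoundedGT
  have : IsNoetherian k (ℳ n) := isNoetherian_iff'.2 this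
  infer_instance

end Components

/-! ### The exterior square as the antisymmetric part -/

section Exterior

variable {k R : Type u} [Field k] [CommRing R] [Algebra k R]
  {M : Type u} [AddCommGroup M] [Module R M] [Module k M] [IsScalarTower k R M]

/-- In characteristic different from two, the relations `x ⊗ x` span exactly the symmetric tensors. -/
theorem mem_wedgeRel_iff (h2 : (2 : k) ≠ 0) (z : M ⊗[R] M) :
    z ∈ wedgeRel R M ↔ z - swapMap k R M z = 0 := by
  constructor
  · intro hz
    have hle : wedgeRel R M ≤
        LinearMap.ker (LinearMap.id - (TensorProduct.comm R M M).toLinearMap) := by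
      rw [wedgeRel, Submodule.span_le]
      rintro _ ⟨x, rfl⟩
      simp
    exact hle hz
  · intro hz
    have hadd : ∀ z : M ⊗[R] M, z + swapMap k R M z ∈ wedgeRel R M := by
      intro z
      induction z using TensorProduct.induction_on with
      | zero => simp
      | add x y hx hy =>
        rw [map_add, add_add_add_comm]
        exact Submodule.add_mem _ hx hy
      | tmul x y =>
        have h1 : ∀ x : M, x ⊗ₜ[R] x ∈ wedgeRel R M := fun x => Submodule.subset_span ⟨x, rfl⟩
        have h3 := Submodule.sub_mem _ (Submodule.sub_mem _ (h1 (x + y)) (h1 x)) (h1 y)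
        convert h3 using 1
        rw [swapMap_tmul, TensorProduct.add_tmul, TensorProduct.tmul_add, TensorProduct.tmul_add]
        abel
    have h3 : z = (2⁻¹ : k) • (z + swapMap k R M z) := by
      rw [← sub_eq_zero.1 hz, ← two_smul k z, smul_smul, inv_mul_cancel₀ h2, one_smul]
    rw [h3, ← algebraMap_smul R]
    exact Submodule.smul_mem _ _ (hadd z)

/-- Any grading of the exterior square compatible with that of `M` is the image of the grading of
`M ⊗ M`, and `Λ² M` is isomorphic to the antisymmetric part, both being quotients by the symmetric tensors. -/
theorem hilbertSeries_exteriorSquare (h2 : (2 : k) ≠ 0) {ℳ : ℕ → Submodule k M}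
    (hM : IsInternal ℳ) (hfd : ∀ n, FiniteDimensional k (ℳ n))
    {𝒢 : ℕ → Submodule k (ExteriorSquare R M)} (hG : IsInternal 𝒢)
    (h𝒢 : ∀ (i j : ℕ) (x y : M), x ∈ ℳ i → y ∈ ℳ j →
      (Submodule.Quotient.mk (x ⊗ₜ[R] y) : ExteriorSquare R M) ∈ 𝒢 (i + j)) :
    hilbertSeries 𝒢 = antisymSeries k R ℳ := by
  let q : M ⊗[R] M →ₗ[k] ExteriorSquare R M := (wedgeRel R M).mkQ.restrictScalars k
  have hq : ∀ n, ∀ z ∈ tensorGrading R ℳ ℳ n, q z ∈ 𝒢 n := by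
    intro n
    change tensorGrading R ℳ ℳ n ≤ (𝒢 n).comap q
    refine tensorGrading_le fun i j hij x hx y hy => ?_
    rw [← hij]
    exact h𝒢 i j x y hx hy
  have hGn : ∀ n, 𝒢 n = (tensorGrading R ℳ ℳ n).map q := by
    intro n
    apply le_antisymm
    · obtain ⟨p, p1, p3⟩ := exists_preimage_of_graded (iSup_tensorGrading (R := R)
        hM.submodule_iSup_eq_top hM.submodule_iSup_eq_top) hG
      intro x hx
      obtain ⟨z, rfl⟩ := Submodule.mkQ_surjective _ x
      rw [← p1 n _ hx]
      exact p3 q hq n z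
    · rintro _ ⟨z, hz, rfl⟩
      exact hq n z hz
  have hker : LinearMap.ker q = LinearMap.ker (LinearMap.id - swapMap k R M) := by
    ext z
    rw [LinearMap.mem_ker, LinearMap.mem_ker]
    exact (Submodule.Quotient.mk_eq_zero _).trans (mem_wedgeRel_iff h2 z)
  ext n
  simp only [hilbertSeries, antisymSeries, PowerSeries.coeff_mk]
  have e1 := finrank_map_add_inf_ker q (tensorGrading R ℳ ℳ n)
  have e2 := finrank_map_add_inf_ker (LinearMap.id - swapMap k R M) (tensorGrading R ℳ ℳ n)
  rw [hker] at e1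
  rw [hGn]
  exact_mod_cast Nat.add_right_cancel (e1.trans e2.symm)

end Exterior

/-! ### The exterior square -/

theorem stmt_3 (k : Type u) [Field k] (hchar : ringChar k ≠ 2)
    [Algebra k R] [IsNoetherianRing R]
    (𝒜 : ℕ → Submodule k R) [GradedAlgebra 𝒜] (h0 : 𝒜 0 = 1)
    [Module k M] [IsScalarTower k R M] [Module.Finite R M]
    (ℳ : ℕ → Submodule k M) [DirectSum.Decomposition ℳ] [SetLike.GradedSMul 𝒜 ℳ]
    (htor : ∀ i : ℕ, 0 < i →
      IsZero (((Tor (ModuleCat.{u} R) i).obj (ModuleCat.of R M)).obj (ModuleCat.of R M)))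
    (𝒢 : ℕ → Submodule k (ExteriorSquare R M)) [DirectSum.Decomposition 𝒢]
    (h𝒢 : ∀ (i j : ℕ) (x y : M), x ∈ ℳ i → y ∈ ℳ j →
      (Submodule.Quotient.mk (x ⊗ₜ[R] y) : ExteriorSquare R M) ∈ 𝒢 (i + j)) :
    hilbertSeries 𝒢 =
      hilbertSeries ℳ ^ 2 * (2 * hilbertSeries 𝒜)⁻¹ -
      hilbertSeries 𝒜 * hilbertSeriesSq ℳ * (2 * hilbertSeriesSq 𝒜)⁻¹ := by
  have hMint : IsInternal ℳ := Decomposition.isInternal ℳ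
  have hGint : IsInternal 𝒢 := Decomposition.isInternal 𝒢
  rcases subsingleton_or_nontrivial R with hR | hR
  · -- Over the zero ring every module vanishes, so all the numerators are zero.
    have hMs : Subsingleton M := Module.subsingleton R M
    have hGs : Subsingleton (ExteriorSquare R M) := Module.subsingleton R _
    have e1 : hilbertSeries 𝒢 = 0 := by
      ext n; simp [hilbertSeries, Module.finrank_zero_of_subsingleton]
    have e2 : hilbertSeries ℳ = 0 := by
      ext n; simp [hilbertSeries, Module.finrank_zero_of_subsingleton]
    have e3 : hilbertSeriesSq ℳ = 0 := by
      ext n; simp [hilbertSeriesSq, Module.finrank_zero_of_subsingleton]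
    simp [e1, e2, e3]
  have h2 : (2 : k) ≠ 0 := Ring.two_ne_zero hchar
  have hAint : IsInternal 𝒜 := Decomposition.isInternal 𝒜
  have hsm : ∀ i j (r : R) (x : M), r ∈ 𝒜 i → x ∈ ℳ j → r • x ∈ ℳ (i + j) :=
    fun i j r x hr hx => SetLike.GradedSMul.smul_mem hr hx
  have hA : ConnectedGrading 𝒜 :=
    { isInternal := hAint
      one_mem := SetLike.GradedOne.one_mem
      mul_mem := fun i j r s hr hs => SetLike.mul_mem_graded hr hs
      finiteDimensional := finiteDimensional_component hAint h0 hAint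
        fun i j r s hr hs => SetLike.mul_mem_graded hr hs
      finrank_zero := by
        rw [h0, Submodule.one_eq_span]
        exact finrank_span_singleton one_ne_zero }
  have hM : ModuleGrading 𝒜 ℳ :=
    ⟨hMint, hsm, finiteDimensional_component hAint h0 hMint hsm⟩
  rw [hilbertSeries_exteriorSquare h2 hMint hM.finiteDimensional hGint h𝒢]
  obtain ⟨e1, e2⟩ := tensorSeries_formula h2 hA hM (torVanishes_of_tor M M htor)
  have hr : 2 * hilbertSeries 𝒜 * (2 * hilbertSeries 𝒜)⁻¹ = 1 :=
    PowerSeries.mul_inv_cancel _ (by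
      rw [map_mul, map_ofNat, ← PowerSeries.coeff_zero_eq_constantCoeff_apply (hilbertSeries 𝒜),
        hilbertSeries, PowerSeries.coeff_mk, hA.finrank_zero]
      simp)
  have hs : 2 * hilbertSeriesSq 𝒜 * (2 * hilbertSeriesSq 𝒜)⁻¹ = 1 :=
    PowerSeries.mul_inv_cancel _ (by
      rw [map_mul, map_ofNat, ← PowerSeries.coeff_zero_eq_constantCoeff_apply (hilbertSeriesSq 𝒜),
        hilbertSeriesSq, PowerSeries.coeff_mk, if_pos (dvd_zero 2), Nat.zero_div, hA.finrank_zero]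
      simp)
  rw [← e1, ← e2]
  generalize (2 * hilbertSeries 𝒜)⁻¹ = u at *
  generalize (2 * hilbertSeriesSq 𝒜)⁻¹ = v at *
  have huv : hilbertSeries 𝒜 * u = hilbertSeriesSq 𝒜 * v := by
    linear_combination hilbertSeriesSq 𝒜 * v * hr - hilbertSeries 𝒜 * u * hs
  linear_combination -(tensorSeries k R ℳ) * huv - antisymSeries k R ℳ * hs
end

section
/- Let R be a positively graded Noetherian algebra over a field k, and let M be a finitely generated graded R-module with Tor_i^R(M, M) = 0 for all i > 0. Then the Hilbert series of M ⊗_R M satisfies H_{M ⊗_R M}(t) = H_M(t)^2 / H_R(t). -/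
/-!
A graded module `K` is covered by the graded free module `R ⊗[k] K` via the action map. Let `K_1` be
the kernel of this cover, and `K_j` the `j`-th iterated syzygy obtained in this way. The exact
sequence `0 → K_1 → R ⊗[k] K → K → 0` gives `H_R H_K = H_{K_1} + H_K`. The spliced covers form a free
resolution of `K`, so the vanishing of `Tor` makes
`0 → M ⊗[R] K_1 → M ⊗[R] (R ⊗[k] K) → M ⊗[R] K → 0` exact; its middle term is `M ⊗[k] K`, whence
`H_M H_K = H_{M ⊗ K_1} + H_{M ⊗ K}`. The same holds with `K_j`, `K_{j+1}` in place of `K`, `K_1`.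

Put `E_j = H_M H_{K_j} - H_R H_{M ⊗ K_j}`. The two identities give `E_j = -E_{j+1}`. Since `R_0 = k`,
the cover is an isomorphism in the lowest degree of `K`, so `K_j` lives in degrees `≥ j` and `X ^ j`
divides `E_j`. Hence `E_0` is divisible by every power of `X`, so it is zero (`GrMod.main`).
Unlike the argument with a minimal resolution and its graded Betti numbers, this one needs no
minimality and no finite generation, only finite-dimensional graded pieces, so the large free
modules `R ⊗[k] K_j` do no harm.

Gradings are handled through their families of projections (`IsGrading`). The theorem follows for
`K = M`, using that the graded pieces are finite-dimensional (`locFin_of_noetherian`), that a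
compatible decomposition of `M ⊗[R] M` is the canonical one (`range_tensorGr_eq`), and that `H_R` has
constant term `1` unless `R = 0`.
-/

open CategoryTheory Limits TensorProduct DirectSum

universe u

/-! ### Tor and projective resolutions -/

section Tor

variable {R : Type u} [CommRing R] {P : ℕ → Type u} [∀ i, AddCommGroup (P i)]
  [∀ i, Module R (P i)] {N : Type u} [AddCommGroup N] [Module R N]

/-- The chain complex `⋯ → P 2 → P 1 → P 0` of an exact sequence of modules. -/
noncomputable def resComplex (d : ∀ i, P (i + 1) →ₗ[R] P i)
    (h : ∀ i, Function.Exact (d (i + 1)) (d i)) : ChainComplex (ModuleCat.{u} R) ℕ :=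
  ChainComplex.of (fun i => ModuleCat.of R (P i)) (fun i => ModuleCat.ofHom (d i))
    (fun i => by
      rw [← ModuleCat.ofHom_comp, (h i).linearMap_comp_eq_zero]; rfl)

theorem resComplex_d (d : ∀ i, P (i + 1) →ₗ[R] P i)
    (h : ∀ i, Function.Exact (d (i + 1)) (d i)) (i : ℕ) :
    (resComplex d h).d (i + 1) i = ModuleCat.ofHom (d i) :=
  ChainComplex.of_d (fun i => ModuleCat.of R (P i)) (fun i => ModuleCat.ofHom (d i)) i

/-- An exact sequence `⋯ → P 1 → P 0 → N → 0` with all `P i` projective, as a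
`ProjectiveResolution` of `N`. -/
noncomputable def projRes [∀ i, Module.Projective R (P i)] (d : ∀ i, P (i + 1) →ₗ[R] P i)
    (h : ∀ i, Function.Exact (d (i + 1)) (d i)) (ε : P 0 →ₗ[R] N)
    (hε : Function.Surjective ε) (h0 : Function.Exact (d 0) ε) :
    ProjectiveResolution (ModuleCat.of R N) where
  complex := resComplex d h
  projective n := by
    show Projective (ModuleCat.of R (P n))
    exact (IsProjective.iff_projective _).1 inferInstance
  π := (ChainComplex.toSingle₀Equiv _ _).symm ⟨ModuleCat.ofHom ε, by
    rw [resComplex_d]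
    have : ModuleCat.ofHom (d 0) ≫ ModuleCat.ofHom ε = 0 := by
      rw [← ModuleCat.ofHom_comp, h0.linearMap_comp_eq_zero]; rfl
    exact this⟩
  quasiIso := ⟨fun n => by
    cases n with
    | zero =>
      rw [ChainComplex.quasiIsoAt₀_iff, ShortComplex.quasiIso_iff_of_zeros']
      · have w : ModuleCat.ofHom (d 0) ≫ ModuleCat.ofHom ε = 0 := by
          rw [← ModuleCat.ofHom_comp, h0.linearMap_comp_eq_zero]; rfl
        refine (ShortComplex.exact_and_epi_g_iff_of_iso
          (S₂ := ShortComplex.mk (ModuleCat.ofHom (d 0)) (ModuleCat.ofHom ε) w) ?_).2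
          ⟨?_, ?_⟩
        · exact ShortComplex.isoMk (Iso.refl _) (Iso.refl _) (Iso.refl _)
            (by
              refine (Category.id_comp _).trans (Eq.trans ?_ (Category.comp_id _).symm)
              exact (resComplex_d d h 0).symm)
            (by
              refine (Category.id_comp _).trans (Eq.trans ?_ (Category.comp_id _).symm)
              exact (ChainComplex.toSingle₀Equiv_symm_apply_f_zero (C := resComplex d h)
                (X := ModuleCat.of R N) _ _).symm)
        · rw [ShortComplex.ShortExact.moduleCat_exact_iff_function_exact]
          exact h0
        · exact (ModuleCat.epi_iff_surjective _).2 hε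
      all_goals rfl
    | succ n =>
      rw [quasiIsoAt_iff_exactAt']
      · rw [HomologicalComplex.exactAt_iff' _ (n + 1 + 1) (n + 1) n (by simp) (by simp),
          ShortComplex.ShortExact.moduleCat_exact_iff_function_exact]
        simp only [HomologicalComplex.sc', HomologicalComplex.shortComplexFunctor']
        rw [resComplex_d, resComplex_d]
        exact h n
      · apply ChainComplex.exactAt_succ_single_obj⟩

/-- If all higher `Tor` of `M` with `N` vanish, then `M ⊗ P` stays exact in positive degrees for any
projective resolution `P` of `N`. Mathlib's `Tor` is the left derived functor of `M ⊗ -`, so it can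
be computed from `projRes`. -/
theorem exact_lTensor_of_tor [∀ i, Module.Projective R (P i)] (d : ∀ i, P (i + 1) →ₗ[R] P i)
    (h : ∀ i, Function.Exact (d (i + 1)) (d i)) (ε : P 0 →ₗ[R] N)
    (hε : Function.Surjective ε) (h0 : Function.Exact (d 0) ε)
    (M : Type u) [AddCommGroup M] [Module R M]
    (htor : ∀ i : ℕ, 0 < i →
      IsZero (((Tor (ModuleCat.{u} R) i).obj (ModuleCat.of R M)).obj (ModuleCat.of R N)))
    (i : ℕ) : Function.Exact ((d (i + 1)).lTensor M) ((d i).lTensor M) := by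
  have hz := htor (i + 1) (Nat.succ_pos i)
  have hz' := hz.of_iso ((projRes d h ε hε h0).isoLeftDerivedObj
    ((MonoidalCategory.tensoringLeft (ModuleCat.{u} R)).obj (ModuleCat.of R M)) (i + 1)).symm
  have hz'' := (HomologicalComplex.exactAt_iff_isZero_homology _ _).2 hz'
  rw [HomologicalComplex.exactAt_iff' _ (i + 1 + 1) (i + 1) i (by simp) (by simp),
    ShortComplex.ShortExact.moduleCat_exact_iff_function_exact] at hz''
  have f1 : ∀ j, (((((MonoidalCategory.tensoringLeft (ModuleCat.{u} R)).obj
      (ModuleCat.of R M)).mapHomologicalComplex _).obj (resComplex d h)).d (j + 1) j)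
      = ModuleCat.ofHom ((d j).lTensor M) := by
    intro j
    rw [Functor.mapHomologicalComplex_obj_d, resComplex_d]
    rfl
  have g := f1 i
  have g' := f1 (i + 1)
  simp only [HomologicalComplex.sc', HomologicalComplex.shortComplexFunctor'] at hz''
  change Function.Exact (((((MonoidalCategory.tensoringLeft (ModuleCat.{u} R)).obj
      (ModuleCat.of R M)).mapHomologicalComplex _).obj (resComplex d h)).d (i + 1 + 1) (i + 1))
      (((((MonoidalCategory.tensoringLeft (ModuleCat.{u} R)).obj
      (ModuleCat.of R M)).mapHomologicalComplex _).obj (resComplex d h)).d (i + 1) i) at hz''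
  rw [g, g'] at hz''
  exact hz''

end Tor

/-! ### Gradings given by projections -/

section Grading

/-- A family of endomorphisms `p n` which are the projections onto the pieces of an `ℕ`-grading:
orthogonal idempotents such that every element is the sum of its components. The `n`-th graded piece
is `LinearMap.range (p n)`. Encoding gradings by projections makes it easy to transport them to
submodules and tensor products. -/
structure IsGrading {k N : Type*} [Field k] [AddCommGroup N] [Module k N]
    (p : ℕ → N →ₗ[k] N) : Prop where
  proj : ∀ i j x, p i (p j x) = if i = j then p j x else 0
  sum : ∀ x, ∃ n, ∑ i ∈ Finset.range n, p i x = x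

/-- Compatibility of scalar multiplication with the gradings `a` of `R` and `p` of `N`: the degree `n`
part of `r • x` is `∑_{i + j = n} a_i(r) • p_j(x)`. -/
def SMulGraded {k R N : Type*} [Field k] [CommRing R] [Algebra k R] [AddCommGroup N] [Module k N]
    [Module R N] (a : ℕ → R →ₗ[k] R) (p : ℕ → N →ₗ[k] N) : Prop :=
  ∀ n r x, p n (r • x) = ∑ ij ∈ Finset.HasAntidiagonal.antidiagonal n, a ij.1 r • p ij.2 x

/-- The Hilbert series of the grading with projections `p`. -/
noncomputable def dimSeries {k N : Type*} [Field k] [AddCommGroup N] [Module k N]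
    (p : ℕ → N →ₗ[k] N) : PowerSeries ℚ :=
  PowerSeries.mk fun n => (Module.finrank k (LinearMap.range (p n)) : ℚ)

/-- Every graded piece is finite-dimensional. -/
def LocFin {k N : Type*} [Field k] [AddCommGroup N] [Module k N]
    (p : ℕ → N →ₗ[k] N) : Prop :=
  ∀ n, FiniteDimensional k (LinearMap.range (p n))

theorem antidiagonal_assoc {A : Type*} [AddCommMonoid A] (f : ℕ → ℕ → ℕ → A) (n : ℕ) :
    ∑ ij ∈ Finset.HasAntidiagonal.antidiagonal n,
      ∑ ab ∈ Finset.HasAntidiagonal.antidiagonal ij.1, f ab.1 ab.2 ij.2 =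
    ∑ ij ∈ Finset.HasAntidiagonal.antidiagonal n,
      ∑ ab ∈ Finset.HasAntidiagonal.antidiagonal ij.2, f ij.1 ab.1 ab.2 := by
  rw [Finset.sum_sigma', Finset.sum_sigma']
  refine Finset.sum_bij' (fun x _ => ⟨(x.2.1, x.2.2 + x.1.2), (x.2.2, x.1.2)⟩)
    (fun x _ => ⟨(x.1.1 + x.2.1, x.2.2), (x.1.1, x.2.1)⟩) ?_ ?_ ?_ ?_ ?_ <;>
    rintro ⟨⟨_, _⟩, ⟨_, _⟩⟩ <;> simp <;> grind

theorem antidiagonal_comm3 {A : Type*} [AddCommMonoid A] (f : ℕ → ℕ → ℕ → A) (n : ℕ) :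
    ∑ ij ∈ Finset.HasAntidiagonal.antidiagonal n,
      ∑ ab ∈ Finset.HasAntidiagonal.antidiagonal ij.1, f ab.1 ab.2 ij.2 =
    ∑ ij ∈ Finset.HasAntidiagonal.antidiagonal n,
      ∑ ab ∈ Finset.HasAntidiagonal.antidiagonal ij.2, f ab.1 ij.1 ab.2 := by
  rw [Finset.sum_sigma', Finset.sum_sigma']
  refine Finset.sum_bij' (fun x _ => ⟨(x.2.2, x.2.1 + x.1.2), (x.2.1, x.1.2)⟩)
    (fun x _ => ⟨(x.2.1 + x.1.1, x.2.2), (x.2.1, x.1.1)⟩) ?_ ?_ ?_ ?_ ?_ <;>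
    rintro ⟨⟨_, _⟩, ⟨_, _⟩⟩ <;> simp <;> grind

section tensor

variable {k R M N : Type*} [Field k] [CommRing R] [Algebra k R] [AddCommGroup N] [Module k N]
    [Module R N] [AddCommGroup M] [Module k M]
    [Module R M] [IsScalarTower k R M] {a : ℕ → R →ₗ[k] R}

/-- The additive map `x ⊗ y ↦ ∑_{i + j = n} p_i(x) ⊗ q_j(y)` on `M ⊗[R] N`. The `R`-balancedness of
this expression uses the components of scalars from `R` in every degree. -/
noncomputable def tensorAdd (p : ℕ → M →ₗ[k] M) (q : ℕ → N →ₗ[k] N)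
    (hp : SMulGraded a p) (hq : SMulGraded a q) (n : ℕ) : M ⊗[R] N →+ M ⊗[R] N :=
  TensorProduct.liftAddHom
    { toFun := fun x =>
        { toFun := fun y => ∑ ij ∈ Finset.HasAntidiagonal.antidiagonal n, p ij.1 x ⊗ₜ[R] q ij.2 y
          map_zero' := by simp
          map_add' := by simp [TensorProduct.tmul_add, Finset.sum_add_distrib] }
      map_zero' := by ext; simp
      map_add' := by intros; ext; simp [TensorProduct.add_tmul, Finset.sum_add_distrib] }
    (by
      intro r x y
      simp only [AddMonoidHom.coe_mk, ZeroHom.coe_mk, hp _ r x, hq _ r y,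
        TensorProduct.sum_tmul, TensorProduct.tmul_sum]
      rw [antidiagonal_comm3 (fun i j l => (a i r • p j x) ⊗ₜ[R] q l y)]
      simp [TensorProduct.smul_tmul])

/-- The degree `n` projection of the canonical grading of `M ⊗[R] N`,
`x ⊗ y ↦ ∑_{i + j = n} p_i(x) ⊗ q_j(y)`. -/
noncomputable def tensorGr (p : ℕ → M →ₗ[k] M) (q : ℕ → N →ₗ[k] N)
    (hp : SMulGraded a p) (hq : SMulGraded a q) (n : ℕ) : M ⊗[R] N →ₗ[k] M ⊗[R] N :=
  { tensorAdd p q hp hq n with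
    map_smul' := by
      intro c z
      change tensorAdd p q hp hq n (c • z) = c • tensorAdd p q hp hq n z
      induction z with
      | zero => simp
      | add z w hz hw => simp [hz, hw]
      | tmul x y =>
        rw [TensorProduct.smul_tmul']
        simp [tensorAdd, Finset.smul_sum, TensorProduct.smul_tmul'] }

variable {p : ℕ → M →ₗ[k] M} {q : ℕ → N →ₗ[k] N} (hp : SMulGraded a p) (hq : SMulGraded a q)

theorem tensorGr_tmul (n : ℕ) (x : M) (y : N) :
    tensorGr p q hp hq n (x ⊗ₜ y) =
      ∑ ij ∈ Finset.HasAntidiagonal.antidiagonal n, p ij.1 x ⊗ₜ[R] q ij.2 y := rfl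

/-- The components of an element vanish in large degrees, and all large partial sums give it back. -/
theorem IsGrading.eq_zero_of_le {p : ℕ → M →ₗ[k] M} (h : IsGrading p) (x : M) :
    ∃ n, ∀ m, n ≤ m → ∑ i ∈ Finset.range m, p i x = x ∧ p m x = 0 := by
  obtain ⟨n, hn⟩ := h.sum x
  have h0 : ∀ m, n ≤ m → p m x = 0 := by
    intro m hm
    rw [← hn, map_sum]
    refine Finset.sum_eq_zero fun i hi => ?_
    rw [h.proj, if_neg]
    have := Finset.mem_range.1 hi
    omega
  refine ⟨n, fun m hm => ⟨?_, h0 m hm⟩⟩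
  rw [← Finset.sum_range_add_sum_Ico _ hm, hn, Finset.sum_eq_zero, add_zero]
  intro i hi
  exact h0 i (Finset.mem_Ico.1 hi).1

theorem tensorGr_isGrading (gp : IsGrading p) (gq : IsGrading q) :
    IsGrading (tensorGr p q hp hq) := by
  constructor
  · intro i j z
    induction z with
    | zero => simp
    | add z w hz hw => simp only [map_add, hz, hw]; split_ifs <;> simp
    | tmul x y =>
      rw [tensorGr_tmul, map_sum]
      simp only [tensorGr_tmul, gp.proj, gq.proj]
      split_ifs with h
      · subst h
        refine Finset.sum_congr rfl fun ij hij => ?_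
        rw [Finset.sum_eq_single ij]
        · simp
        · rintro ⟨c, d⟩ _ hne
          by_cases h1 : c = ij.1
          · rw [if_neg (c := d = ij.2), TensorProduct.tmul_zero]
            intro h2; exact hne (Prod.ext h1 h2)
          · rw [if_neg h1, TensorProduct.zero_tmul]
        · exact fun h => absurd hij h
      · refine Finset.sum_eq_zero fun ij hij => Finset.sum_eq_zero fun ab hab => ?_
        rw [Finset.HasAntidiagonal.mem_antidiagonal] at hij hab
        by_cases h1 : ab.1 = ij.1
        · rw [if_neg (c := ab.2 = ij.2), TensorProduct.tmul_zero]
          omega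
        · rw [if_neg h1, TensorProduct.zero_tmul]
  · -- Eventual equality of partial sums is stable under addition, unlike equality for a single `n`.
    have key : ∀ z : M ⊗[R] N, ∃ n, ∀ m, n ≤ m →
        ∑ i ∈ Finset.range m, tensorGr p q hp hq i z = z := by
      intro z
      induction z with
      | zero => exact ⟨0, by simp⟩
      | add z w hz hw =>
        obtain ⟨n, hn⟩ := hz
        obtain ⟨m, hm⟩ := hw
        refine ⟨max n m, fun l hl => ?_⟩
        simp only [map_add, Finset.sum_add_distrib]
        rw [hn l (le_trans (le_max_left _ _) hl), hm l (le_trans (le_max_right _ _) hl)]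
      | tmul x y =>
        obtain ⟨n, hn⟩ := gp.eq_zero_of_le x
        obtain ⟨m, hm⟩ := gq.eq_zero_of_le y
        refine ⟨n + m, fun l hl => ?_⟩
        simp only [tensorGr_tmul]
        rw [Finset.sum_sigma']
        conv_rhs => rw [← (hn n le_rfl).1, ← (hm m le_rfl).1, TensorProduct.sum_tmul]
        simp only [TensorProduct.tmul_sum]
        rw [← Finset.sum_product']
        symm
        refine Finset.sum_of_injOn (fun ij => ⟨ij.1 + ij.2, ij⟩) ?_ ?_ ?_ ?_
        · rintro ⟨a, b⟩ _ ⟨c, d⟩ _ h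
          simp at h; grind
        · rintro ⟨a, b⟩ h
          simp at h ⊢; omega
        · rintro ⟨s, ⟨a, b⟩⟩ h h'
          simp at h h'
          by_cases h1 : n ≤ a
          · rw [(hn a h1).2, TensorProduct.zero_tmul]
          · by_cases h2 : m ≤ b
            · rw [(hm b h2).2, TensorProduct.tmul_zero]
            · exact absurd h.2 (by simpa using h' (by omega) (by omega))
        · rintro ⟨a, b⟩ _; rfl
    intro z
    obtain ⟨n, hn⟩ := key z
    exact ⟨n, hn n le_rfl⟩

/-- `M ⊗ f` respects the tensor gradings when `f` respects the gradings. -/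
theorem lTensor_comm {N' : Type*} [AddCommGroup N'] [Module k N'] [Module R N']
    {q' : ℕ → N' →ₗ[k] N'} (hq' : SMulGraded a q')
    (f : N →ₗ[R] N') (hf : ∀ n x, f (q n x) = q' n (f x)) (n : ℕ) (z : M ⊗[R] N) :
    f.lTensor M (tensorGr p q hp hq n z) = tensorGr p q' hp hq' n (f.lTensor M z) := by
  induction z with
  | zero => simp
  | add z w hz hw => simp [hz, hw]
  | tmul x y => simp [tensorGr_tmul, hf]

/-- If `N` lives in degrees `≥ c`, so does `M ⊗[R] N`. -/
theorem tensorGr_eq_zero {c n : ℕ} (hcn : n < c) (h : ∀ i, i < c → q i = 0) :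
    tensorGr p q hp hq n = 0 := by
  ext z
  induction z with
  | zero => simp
  | add z w hz hw => simp [hz, hw]
  | tmul x y =>
    rw [tensorGr_tmul]
    refine Finset.sum_eq_zero fun ij hij => ?_
    rw [Finset.HasAntidiagonal.mem_antidiagonal] at hij
    rw [h ij.2 (by omega)]; simp

end tensor

section field

variable {k M N : Type*} [Field k] [AddCommGroup N] [Module k N]
    [AddCommGroup M] [Module k M]

/-- The grading of `k` concentrated in degree `0`. -/
def trivGr (k : Type*) [Field k] (n : ℕ) : k →ₗ[k] k := if n = 0 then LinearMap.id else 0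

theorem smulGraded_triv (p : ℕ → M →ₗ[k] M) : SMulGraded (trivGr k) p := by
  intro n r x
  rw [Finset.sum_eq_single (0, n)]
  · simp [trivGr]
  · rintro ⟨i, j⟩ h hne
    rw [Finset.HasAntidiagonal.mem_antidiagonal] at h
    have : i ≠ 0 := by rintro rfl; simp at h; exact hne (by simp [h])
    simp [trivGr, this]
  · simp

/-- The projections of the grading of a tensor product over the base field: the case `R = k`, with
trivial grading, of `tensorGr`. -/
noncomputable abbrev tensorK (p : ℕ → M →ₗ[k] M) (q : ℕ → N →ₗ[k] N) (n : ℕ) :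
    M ⊗[k] N →ₗ[k] M ⊗[k] N :=
  tensorGr p q (smulGraded_triv p) (smulGraded_triv q) n

variable {p : ℕ → M →ₗ[k] M} {q : ℕ → N →ₗ[k] N}

theorem tensorK_eq_sum (n : ℕ) (z : M ⊗[k] N) :
    tensorK p q n z = ∑ ij ∈ Finset.HasAntidiagonal.antidiagonal n,
      TensorProduct.map (p ij.1) (q ij.2) z := by
  induction z with
  | zero => simp
  | add z w hz hw => simp only [map_add, hz, hw, Finset.sum_add_distrib]
  | tmul x y => simp [tensorGr_tmul]

theorem IsGrading.rangeRestrict_comp_self (gp : IsGrading p) (i : ℕ) :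
    (p i).rangeRestrict ∘ₗ (LinearMap.range (p i)).subtype = LinearMap.id := by
  ext ⟨_, x, rfl⟩
  simp [gp.proj]

theorem IsGrading.rangeRestrict_comp_ne (gp : IsGrading p) {i j : ℕ} (h : i ≠ j) :
    (p i).rangeRestrict ∘ₗ (LinearMap.range (p j)).subtype = 0 := by
  ext ⟨_, x, rfl⟩
  simp [gp.proj, h]

theorem IsGrading.apply_of_mem (gp : IsGrading p) {i : ℕ} {x : M}
    (h : x ∈ LinearMap.range (p i)) : p i x = x := by
  obtain ⟨y, rfl⟩ := h
  simp [gp.proj]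

/-- The degree `n` piece of `M ⊗[k] N` is the direct sum of the `M_i ⊗[k] N_j` with `i + j = n`. -/
noncomputable def tensorKEquiv (gp : IsGrading p) (gq : IsGrading q) (n : ℕ) :
    LinearMap.range (tensorK p q n) ≃ₗ[k] (∀ ij : Finset.HasAntidiagonal.antidiagonal n,
      LinearMap.range (p ij.1.1) ⊗[k] LinearMap.range (q ij.1.2)) :=
  LinearEquiv.ofLinearMap
    ((LinearMap.pi fun ij : Finset.HasAntidiagonal.antidiagonal n =>
      TensorProduct.map (p ij.1.1).rangeRestrict (q ij.1.2).rangeRestrict) ∘ₗ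
        (LinearMap.range (tensorK p q n)).subtype)
    (LinearMap.codRestrict _ (∑ ij : Finset.HasAntidiagonal.antidiagonal n,
      (TensorProduct.map (LinearMap.range (p ij.1.1)).subtype
        (LinearMap.range (q ij.1.2)).subtype) ∘ₗ LinearMap.proj ij) (by
      intro v
      rw [LinearMap.sum_apply]
      refine Submodule.sum_mem _ fun ij _ => ?_
      simp only [LinearMap.comp_apply, LinearMap.proj_apply]
      induction v ij with
      | zero => simp
      | add z w hz hw => rw [map_add]; exact Submodule.add_mem _ hz hw
      | tmul x y =>
        refine ⟨x.1 ⊗ₜ y.1, ?_⟩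
        rw [tensorGr_tmul, Finset.sum_eq_single ij.1]
        · rw [gp.apply_of_mem x.2, gq.apply_of_mem y.2]; rfl
        · intro ab hab hne
          obtain ⟨⟨i, j⟩, hij⟩ := ij
          obtain ⟨_, x, rfl⟩ := x
          have : ab.1 ≠ i := by
            rw [Finset.HasAntidiagonal.mem_antidiagonal] at hij hab
            intro h
            exact hne (Prod.ext h (by simp at *; omega))
          simp [gp.proj, this]
        · exact fun h => absurd ij.2 h))
    (by
      refine LinearMap.ext fun v => funext fun ab => ?_
      simp only [LinearMap.comp_apply, LinearMap.pi_apply, Submodule.subtype_apply,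
        LinearMap.codRestrict_apply, LinearMap.sum_apply, LinearMap.proj_apply, map_sum,
        LinearMap.id_apply]
      rw [Finset.sum_eq_single ab]
      · rw [← LinearMap.comp_apply, ← TensorProduct.map_comp, gp.rangeRestrict_comp_self,
          gq.rangeRestrict_comp_self, TensorProduct.map_id, LinearMap.id_apply]
      · intro ij _ hne
        have : ab.1.1 ≠ ij.1.1 := by
          have h1 := Finset.HasAntidiagonal.mem_antidiagonal.1 ij.2
          have h2 := Finset.HasAntidiagonal.mem_antidiagonal.1 ab.2
          intro h
          exact hne (Subtype.ext (Prod.ext h.symm (by omega)))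
        rw [← LinearMap.comp_apply, ← TensorProduct.map_comp, gp.rangeRestrict_comp_ne this,
          TensorProduct.map_zero_left, LinearMap.zero_apply]
      · simp)
    (by
      refine LinearMap.ext fun z => Subtype.ext ?_
      simp only [LinearMap.comp_apply, LinearMap.pi_apply, Submodule.subtype_apply,
        LinearMap.codRestrict_apply, LinearMap.sum_apply, LinearMap.proj_apply,
        LinearMap.id_apply]
      conv_rhs => rw [← (tensorGr_isGrading (smulGraded_triv p) (smulGraded_triv q) gp
        gq).apply_of_mem z.2, tensorK_eq_sum]
      refine Eq.trans ?_ (Finset.sum_coe_sort (Finset.HasAntidiagonal.antidiagonal n)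
        (fun ij => TensorProduct.map (p ij.1) (q ij.2) z.1))
      refine Finset.sum_congr rfl fun ij _ => ?_
      rw [← LinearMap.comp_apply, ← TensorProduct.map_comp]
      rfl)

theorem tensorK_locFin (gp : IsGrading p) (gq : IsGrading q) (fp : LocFin p) (fq : LocFin q) :
    LocFin (tensorK p q) := by
  intro n
  have : ∀ i, FiniteDimensional k (LinearMap.range (p i)) := fp
  have : ∀ i, FiniteDimensional k (LinearMap.range (q i)) := fq
  exact Module.Finite.equiv (tensorKEquiv gp gq n).symm

/-- Over the base field, the Hilbert series of a tensor product is the product of the series. -/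
theorem tensorK_dimSeries (gp : IsGrading p) (gq : IsGrading q) (fp : LocFin p) (fq : LocFin q) :
    dimSeries (tensorK p q) = dimSeries p * dimSeries q := by
  ext n
  have : ∀ i, FiniteDimensional k (LinearMap.range (p i)) := fp
  have : ∀ i, FiniteDimensional k (LinearMap.range (q i)) := fq
  simp only [dimSeries, PowerSeries.coeff_mul, PowerSeries.coeff_mk]
  rw [(tensorKEquiv gp gq n).finrank_eq, Module.finrank_pi_fintype]
  simp only [Module.finrank_tensorProduct]
  rw [Finset.sum_coe_sort (Finset.HasAntidiagonal.antidiagonal n)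
    (fun ij => Module.finrank k (LinearMap.range (p ij.1)) *
      Module.finrank k (LinearMap.range (q ij.2)))]
  push_cast
  rfl

end field

section exact

variable {k A B C : Type*} [Field k] [AddCommGroup A] [Module k A]
    [AddCommGroup B] [Module k B] [AddCommGroup C] [Module k C]
    {p : ℕ → A →ₗ[k] A} {q : ℕ → B →ₗ[k] B} {r : ℕ → C →ₗ[k] C}

theorem locFin_of_injective (f : A →ₗ[k] B) (hf : Function.Injective f)
    (hpq : ∀ n x, f (p n x) = q n (f x)) (fq : LocFin q) : LocFin p := by
  intro n
  have := fq n
  have h : ∀ x ∈ LinearMap.range (p n), f x ∈ LinearMap.range (q n) := by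
    rintro _ ⟨x, rfl⟩; exact ⟨f x, (hpq n x).symm⟩
  exact FiniteDimensional.of_injective (f.restrict h)
    (fun x y hxy => Subtype.ext (hf (congrArg Subtype.val hxy)))

/-- Additivity of the Hilbert series on short exact sequences of graded vector spaces. -/
theorem dimSeries_add_of_exact (f : A →ₗ[k] B) (g : B →ₗ[k] C) (hf : Function.Injective f)
    (hg : Function.Surjective g) (hfg : Function.Exact f g)
    (hpq : ∀ n x, f (p n x) = q n (f x)) (hqr : ∀ n x, g (q n x) = r n (g x))
    (gq : IsGrading q) (fq : LocFin q) : dimSeries q = dimSeries p + dimSeries r := by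
  ext n
  simp only [dimSeries, map_add, PowerSeries.coeff_mk]
  norm_cast
  have := fq n
  have h : ∀ x ∈ LinearMap.range (p n), f x ∈ LinearMap.range (q n) := by
    rintro _ ⟨x, rfl⟩; exact ⟨f x, (hpq n x).symm⟩
  have h' : ∀ x ∈ LinearMap.range (q n), g x ∈ LinearMap.range (r n) := by
    rintro _ ⟨x, rfl⟩; exact ⟨g x, (hqr n x).symm⟩
  rw [← LinearMap.finrank_range_add_finrank_ker (g.restrict h'), add_comm]
  have e1 : LinearMap.range (g.restrict h') = ⊤ := by
    rw [LinearMap.range_eq_top]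
    rintro ⟨_, x, rfl⟩
    obtain ⟨y, rfl⟩ := hg x
    exact ⟨⟨q n y, y, rfl⟩, Subtype.ext (hqr n y)⟩
  have e2 : LinearMap.ker (g.restrict h') = LinearMap.range (f.restrict h) := by
    ext ⟨x, hx⟩
    constructor
    · intro hk
      have hk' : g x = 0 := congrArg Subtype.val (LinearMap.mem_ker.1 hk)
      obtain ⟨y, rfl⟩ := (hfg x).1 hk'
      exact ⟨⟨p n y, y, rfl⟩, Subtype.ext ((hpq n y).trans (gq.apply_of_mem hx))⟩
    · rintro ⟨y, hy⟩
      have hy' : f y = x := congrArg Subtype.val hy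
      exact Subtype.ext ((hfg x).2 ⟨y, hy'⟩)
  rw [e1, e2, finrank_top, LinearMap.finrank_range_of_inj
    (fun x y hxy => Subtype.ext (hf (congrArg Subtype.val hxy)))]

theorem dimSeries_eq_of_equiv (f : A ≃ₗ[k] B) (hpq : ∀ n x, f (p n x) = q n (f x)) :
    dimSeries p = dimSeries q := by
  ext n
  simp only [dimSeries, PowerSeries.coeff_mk]
  have h1 : (f : A →ₗ[k] B) ∘ₗ p n = q n ∘ₗ (f : A →ₗ[k] B) := LinearMap.ext (hpq n)
  have h2 : LinearMap.range (q n) = (LinearMap.range (p n)).map (f : A →ₗ[k] B) := by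
    rw [← LinearMap.range_comp, h1, LinearMap.range_comp_of_range_eq_top _ (LinearEquiv.range f)]
  rw [h2, LinearEquiv.finrank_map_eq f]

theorem locFin_of_equiv (f : A ≃ₗ[k] B) (hpq : ∀ n x, f (p n x) = q n (f x)) (fq : LocFin q) :
    LocFin p := locFin_of_injective f.toLinearMap f.injective hpq fq

end exact

end Grading

/-! ### Syzygies of graded free covers -/

section Syzygies

/-- The projections `a` define a connected, locally finite algebra grading on `R`: the degree `0`
part consists of the scalars from `k`. (`R = 0` is not excluded.) -/
structure IsConnectedGrading {k R : Type u} [Field k] [CommRing R] [Algebra k R]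
    (a : ℕ → R →ₗ[k] R) : Prop where
  isGrading : IsGrading a
  smul : SMulGraded a a
  locFin : LocFin a
  one : ∀ n, a n 1 = if n = 0 then 1 else 0
  zero : ∀ r, ∃ c : k, a 0 r = algebraMap k R c

/-- A locally finite graded `R`-module, bundled with its projections so that syzygies can be iterated
by recursion. The degrees are natural numbers. -/
structure GrMod {k R : Type u} [Field k] [CommRing R] [Algebra k R] (a : ℕ → R →ₗ[k] R) where
  carrier : Type u
  [addCommGroup : AddCommGroup carrier]
  [moduleBase : Module k carrier]
  [moduleRing : Module R carrier]
  [isScalarTower : IsScalarTower k R carrier]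
  p : ℕ → carrier →ₗ[k] carrier
  isGrading : IsGrading p
  smul : SMulGraded a p
  locFin : LocFin p

attribute [instance] GrMod.addCommGroup GrMod.moduleBase GrMod.moduleRing GrMod.isScalarTower

variable {k R : Type u} [Field k] [CommRing R] [Algebra k R] {a : ℕ → R →ₗ[k] R}
  (ha : IsConnectedGrading a)

/-- The action map `r ⊗ x ↦ r • x`, exhibiting `K` as a quotient of the graded free module
`R ⊗[k] K`. -/
noncomputable def GrMod.act (K : GrMod a) : R ⊗[k] K.carrier →ₗ[R] K.carrier :=
  LinearMap.liftBaseChange R LinearMap.id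

theorem GrMod.act_tmul (K : GrMod a) (r : R) (x : K.carrier) : K.act (r ⊗ₜ x) = r • x := rfl

theorem GrMod.act_surjective (K : GrMod a) : Function.Surjective K.act :=
  fun x => ⟨1 ⊗ₜ x, by rw [K.act_tmul, one_smul]⟩

theorem GrMod.act_comm (K : GrMod a) (n : ℕ) (z : R ⊗[k] K.carrier) :
    K.act (tensorK a K.p n z) = K.p n (K.act z) := by
  induction z with
  | zero => simp
  | add z w hz hw => simp only [map_add, hz, hw]
  | tmul r x => rw [tensorGr_tmul, K.act_tmul, K.smul, map_sum]; rfl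

include ha in
theorem GrMod.smul_cover (K : GrMod a) : SMulGraded a (tensorK a K.p) := by
  intro n r z
  induction z with
  | zero => simp
  | add z w hz hw => simp only [smul_add, map_add, hz, hw, Finset.sum_add_distrib]
  | tmul s x =>
    simp only [TensorProduct.smul_tmul', tensorGr_tmul, ha.smul _ r s, TensorProduct.sum_tmul,
      Finset.smul_sum]
    exact antidiagonal_assoc (fun i j l => (a i r • a j s) ⊗ₜ[k] K.p l x) n

/-- The kernel of the free cover `R ⊗[k] K → K`, with the induced grading. -/
noncomputable def GrMod.syzygy (K : GrMod a) : GrMod a where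
  carrier := LinearMap.ker K.act
  p n :=
    { toFun := fun z => ⟨tensorK a K.p n z.1, by
        rw [LinearMap.mem_ker, K.act_comm, LinearMap.mem_ker.1 z.2, map_zero]⟩
      map_add' := fun z w => Subtype.ext (map_add _ _ _)
      map_smul' := fun c z => Subtype.ext (map_smul (tensorK a K.p n) c z.1) }
  isGrading := by
    have h := tensorGr_isGrading (smulGraded_triv a) (smulGraded_triv K.p) ha.isGrading K.isGrading
    constructor
    · intro i j z
      refine Subtype.ext ((h.proj i j z.1).trans ?_)
      split_ifs <;> rfl
    · intro z
      obtain ⟨n, hn⟩ := h.sum z.1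
      refine ⟨n, Subtype.ext (Eq.trans ?_ hn)⟩
      rw [AddSubmonoidClass.coe_finsetSum]
      rfl
  smul := by
    intro n r z
    refine Subtype.ext ((K.smul_cover ha n r z.1).trans ?_)
    rw [AddSubmonoidClass.coe_finsetSum]
    rfl
  locFin := locFin_of_injective ((LinearMap.ker K.act).subtype.restrictScalars k)
    Subtype.val_injective (fun _ _ => rfl)
    (tensorK_locFin ha.isGrading K.isGrading ha.locFin K.locFin)

/-- If `K` lives in degrees `≥ d`, its syzygy lives in degrees `≥ d + 1`: in degree at most `d` the
cover `R ⊗[k] K → K` has the inverse `x ↦ 1 ⊗ x`, because `R_0` consists of scalars. -/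
theorem GrMod.syzygy_eq_zero (K : GrMod a) {d : ℕ} (h : ∀ i, i < d → K.p i = 0) (i : ℕ)
    (hi : i < d + 1) : (K.syzygy ha).p i = 0 := by
  have key : ∀ z : R ⊗[k] K.carrier, tensorK a K.p i z = 1 ⊗ₜ K.p i (K.act z) := by
    intro z
    induction z with
    | zero => simp
    | add z w hz hw => simp only [map_add, hz, hw, TensorProduct.tmul_add]
    | tmul r x =>
      have h0 : ∀ ij ∈ Finset.HasAntidiagonal.antidiagonal i, ij ≠ (0, i) → K.p ij.2 = 0 := by
        intro ij hij hne
        rw [Finset.HasAntidiagonal.mem_antidiagonal] at hij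
        refine h _ (lt_of_le_of_ne (by omega) fun h' => hne (Prod.ext ?_ ?_)) <;> simp <;> omega
      rw [K.act_tmul, K.smul, tensorGr_tmul, Finset.sum_eq_single (0, i),
        Finset.sum_eq_single (0, i)]
      · obtain ⟨c, hc⟩ := ha.zero r
        simp only [hc]
        rw [algebraMap_smul, TensorProduct.tmul_smul, TensorProduct.smul_tmul',
          Algebra.algebraMap_eq_smul_one]
      · intro ij hij hne; simp [h0 ij hij hne]
      · simp
      · intro ij hij hne; simp [h0 ij hij hne]
      · simp
  refine LinearMap.ext fun z => Subtype.ext ?_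
  refine (key z.1).trans ?_
  rw [LinearMap.mem_ker.1 z.2, map_zero, TensorProduct.tmul_zero]
  rfl

/-- The `i`-th iterated syzygy of `K`. -/
noncomputable def GrMod.syz (K : GrMod a) : ℕ → GrMod a
  | 0 => K
  | i + 1 => (GrMod.syz K i).syzygy ha

theorem GrMod.syz_eq_zero (K : GrMod a) (j : ℕ) : ∀ i, i < j → (K.syz ha j).p i = 0 := by
  induction j with
  | zero => intro i hi; omega
  | succ j ih => exact (K.syz ha j).syzygy_eq_zero ha ih

/-- The inclusion of the `(i + 1)`-st syzygy into the free cover of the `i`-th one. -/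
noncomputable def GrMod.incl (K : GrMod a) (i : ℕ) :
    (K.syz ha (i + 1)).carrier →ₗ[R] R ⊗[k] (K.syz ha i).carrier :=
  (LinearMap.ker (K.syz ha i).act).subtype

/-- The differential `R ⊗[k] K_{i+1} → K_{i+1} ⊆ R ⊗[k] K_i` of the free resolution of `K` spliced
from the covers of its syzygies `K_i`. -/
noncomputable def GrMod.resD (K : GrMod a) (i : ℕ) :
    R ⊗[k] (K.syz ha (i + 1)).carrier →ₗ[R] R ⊗[k] (K.syz ha i).carrier :=
  K.incl ha i ∘ₗ (K.syz ha (i + 1)).act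

theorem GrMod.exact_resD_act (K : GrMod a) (i : ℕ) :
    Function.Exact (K.resD ha i) (K.syz ha i).act := by
  intro z
  constructor
  · intro hz
    obtain ⟨w, hw⟩ := (K.syz ha (i + 1)).act_surjective ⟨z, hz⟩
    exact ⟨w, congrArg Subtype.val hw⟩
  · rintro ⟨w, rfl⟩
    exact ((K.syz ha (i + 1)).act w).2

theorem GrMod.exact_resD (K : GrMod a) (i : ℕ) :
    Function.Exact (K.resD ha (i + 1)) (K.resD ha i) :=
  (K.exact_resD_act ha (i + 1)).comp_injective (LinearMap.ker (K.syz ha i).act).subtype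
    Subtype.val_injective (map_zero _)

/-- Tor-vanishing makes `M ⊗[R] K_{i+1} → M ⊗[R] (R ⊗[k] K_i)` injective. -/
theorem GrMod.lTensor_injective (M K : GrMod a)
    (htor : ∀ i : ℕ, 0 < i → IsZero (((Tor (ModuleCat.{u} R) i).obj
      (ModuleCat.of R M.carrier)).obj (ModuleCat.of R K.carrier))) (i : ℕ) :
    Function.Injective ((LinearMap.ker (K.syz ha i).act).subtype.lTensor M.carrier) := by
  have hex := exact_lTensor_of_tor (P := fun i => R ⊗[k] (K.syz ha i).carrier)
    (N := K.carrier) (K.resD ha) (K.exact_resD ha) K.act K.act_surjective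
    (K.exact_resD_act ha 0) M.carrier htor i
  change Function.Injective ((K.incl ha i).lTensor M.carrier)
  rw [injective_iff_map_eq_zero]
  intro x hx
  obtain ⟨y, rfl⟩ := LinearMap.lTensor_surjective M.carrier
    (K.syz ha (i + 1)).act_surjective x
  have hy : (K.resD ha i).lTensor M.carrier y = 0 := by
    rw [GrMod.resD, LinearMap.lTensor_comp]; exact hx
  obtain ⟨w, rfl⟩ := (hex y).1 hy
  rw [← LinearMap.comp_apply, ← LinearMap.lTensor_comp,
    (K.exact_resD_act ha (i + 1)).linearMap_comp_eq_zero, LinearMap.lTensor_zero]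
  rfl

/-- The projections of the canonical grading of `M ⊗[R] K`. -/
noncomputable abbrev GrMod.tensor (M K : GrMod a) (n : ℕ) :
    M.carrier ⊗[R] K.carrier →ₗ[k] M.carrier ⊗[R] K.carrier :=
  tensorGr M.p K.p M.smul K.smul n

/-- `H_R H_K = H_{K_1} + H_K`, where `K_1` is the syzygy of `K`. -/
theorem GrMod.dimSeries_cover (K : GrMod a) :
    dimSeries a * dimSeries K.p = dimSeries (K.syzygy ha).p + dimSeries K.p := by
  rw [← tensorK_dimSeries ha.isGrading K.isGrading ha.locFin K.locFin]
  exact dimSeries_add_of_exact ((LinearMap.ker K.act).subtype.restrictScalars k)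
    (K.act.restrictScalars k) Subtype.val_injective K.act_surjective
    (LinearMap.exact_subtype_ker_map K.act) (fun _ _ => rfl) K.act_comm
    (tensorGr_isGrading _ _ ha.isGrading K.isGrading)
    (tensorK_locFin ha.isGrading K.isGrading ha.locFin K.locFin)

/-- The `k`-linear isomorphism `M ⊗[k] K ≃ M ⊗[R] (R ⊗[k] K)`. -/
noncomputable def GrMod.cancel (M K : GrMod a) :
    M.carrier ⊗[k] K.carrier ≃ₗ[k] M.carrier ⊗[R] (R ⊗[k] K.carrier) :=
  (TensorProduct.AlgebraTensorModule.cancelBaseChange k R R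
    M.carrier K.carrier).symm.restrictScalars k

theorem GrMod.cancel_tmul (M K : GrMod a) (x : M.carrier) (y : K.carrier) :
    M.cancel K (x ⊗ₜ y) = x ⊗ₜ (1 ⊗ₜ y) := rfl

include ha in
theorem GrMod.cancel_comm (M K : GrMod a) (n : ℕ) (z : M.carrier ⊗[k] K.carrier) :
    M.cancel K (tensorK M.p K.p n z) =
      tensorGr M.p (tensorK a K.p) M.smul (K.smul_cover ha) n (M.cancel K z) := by
  induction z with
  | zero => simp
  | add z w hz hw => simp only [map_add, hz, hw]
  | tmul x y =>
    rw [tensorGr_tmul, map_sum, GrMod.cancel_tmul, tensorGr_tmul]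
    refine Finset.sum_congr rfl fun ij _ => ?_
    rw [GrMod.cancel_tmul, tensorGr_tmul, Finset.sum_eq_single (0, ij.2)]
    · simp [ha.one]
    · intro bc hbc hne
      rw [Finset.HasAntidiagonal.mem_antidiagonal] at hbc
      rw [ha.one, if_neg, TensorProduct.zero_tmul]
      intro h0
      exact hne (Prod.ext h0 (by simp only; omega))
    · simp

/-- `H_M H_K = H_{M ⊗ K_1} + H_{M ⊗ K}`, provided that tensoring with `M` keeps the syzygy `K_1` of
`K` a submodule of the free cover. -/
theorem GrMod.dimSeries_tensor_cover (M K : GrMod a)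
    (hinj : Function.Injective ((LinearMap.ker K.act).subtype.lTensor M.carrier)) :
    dimSeries M.p * dimSeries K.p =
      dimSeries (M.tensor (K.syzygy ha)) + dimSeries (M.tensor K) := by
  rw [← tensorK_dimSeries M.isGrading K.isGrading M.locFin K.locFin,
    dimSeries_eq_of_equiv (M.cancel K) (M.cancel_comm ha K)]
  refine dimSeries_add_of_exact
    (((LinearMap.ker K.act).subtype.lTensor M.carrier).restrictScalars k)
    ((K.act.lTensor M.carrier).restrictScalars k) hinj
    (LinearMap.lTensor_surjective M.carrier K.act_surjective)
    (lTensor_exact M.carrier (LinearMap.exact_subtype_ker_map K.act) K.act_surjective)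
    ?_ ?_
    (tensorGr_isGrading _ _ M.isGrading
      (tensorGr_isGrading _ _ ha.isGrading K.isGrading))
    (locFin_of_equiv (M.cancel K).symm ?_
      (tensorK_locFin M.isGrading K.isGrading M.locFin K.locFin))
  · exact fun n z => lTensor_comm M.smul (K.syzygy ha).smul (K.smul_cover ha) _ (fun _ _ => rfl) n z
  · exact fun n z => lTensor_comm M.smul (K.smul_cover ha) K.smul _ K.act_comm n z
  · intro n z
    rw [LinearEquiv.symm_apply_eq, M.cancel_comm ha K, LinearEquiv.apply_symm_apply]

theorem dimSeries_dvd {N : Type*} [AddCommGroup N] [Module k N] {p : ℕ → N →ₗ[k] N} {d : ℕ}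
    (h : ∀ i, i < d → p i = 0) : (PowerSeries.X : PowerSeries ℚ) ^ d ∣ dimSeries p := by
  rw [PowerSeries.X_pow_dvd_iff]
  intro m hm
  simp only [dimSeries, PowerSeries.coeff_mk]
  rw [h m hm, LinearMap.range_zero, finrank_bot, Nat.cast_zero]

include ha in
/-- If the higher `Tor` of `M` and `K` vanish, then `H_M H_K = H_R H_{M ⊗ K}`. -/
theorem GrMod.main (M K : GrMod a)
    (htor : ∀ i : ℕ, 0 < i → IsZero (((Tor (ModuleCat.{u} R) i).obj
      (ModuleCat.of R M.carrier)).obj (ModuleCat.of R K.carrier))) :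
    dimSeries M.p * dimSeries K.p = dimSeries a * dimSeries (M.tensor K) := by
  -- The defect of the claimed equality for the `j`-th syzygy changes only its sign with `j`, and is
  -- divisible by `X ^ j`.
  let E : ℕ → PowerSeries ℚ := fun j => dimSeries M.p * dimSeries (K.syz ha j).p -
    dimSeries a * dimSeries (M.tensor (K.syz ha j))
  have hE : ∀ j, E j = - E (j + 1) := by
    intro j
    have h1 := (K.syz ha j).dimSeries_cover ha
    have h2 := M.dimSeries_tensor_cover ha (K.syz ha j) (M.lTensor_injective ha K htor j)
    change dimSeries a * _ = dimSeries (K.syz ha (j + 1)).p + _ at h1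
    change dimSeries M.p * _ = dimSeries (M.tensor (K.syz ha (j + 1))) + _ at h2
    simp only [E]
    linear_combination dimSeries a * h2 - dimSeries M.p * h1
  have hdvd : ∀ j, (PowerSeries.X : PowerSeries ℚ) ^ j ∣ E j := by
    intro j
    have h := K.syz_eq_zero ha j
    refine dvd_sub (Dvd.dvd.mul_left (dimSeries_dvd h) _) (Dvd.dvd.mul_left (dimSeries_dvd ?_) _)
    exact fun i hi => tensorGr_eq_zero _ _ hi h
  have hdvd0 : ∀ j, (PowerSeries.X : PowerSeries ℚ) ^ j ∣ E 0 := by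
    intro j
    have : ∀ j, E 0 = E j ∨ E 0 = - E j := by
      intro j
      induction j with
      | zero => exact Or.inl rfl
      | succ j ih => rcases ih with h | h <;> rw [h, hE j] <;> simp
    rcases this j with h | h <;> rw [h]
    · exact hdvd j
    · exact (dvd_neg.2 (hdvd j))
  have h0 : E 0 = 0 := by
    ext n
    exact PowerSeries.X_pow_dvd_iff.1 (hdvd0 (n + 1)) n (Nat.lt_succ_self n)
  exact sub_eq_zero.1 h0

end Syzygies

/-! ### Decompositions into graded pieces -/

section Pieces

variable {k A : Type u} [Field k] [AddCommGroup A] [Module k A]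
  (𝒩 : ℕ → Submodule k A) [DirectSum.Decomposition 𝒩]

/-- The projection of `A` onto the `n`-th piece of a decomposition, as an endomorphism of `A`. -/
noncomputable def gproj (n : ℕ) : A →ₗ[k] A :=
  (𝒩 n).subtype ∘ₗ DirectSum.component k ℕ (fun i => 𝒩 i) n ∘ₗ
    (DirectSum.decomposeLinearEquiv 𝒩).toLinearMap

theorem gproj_apply (n : ℕ) (x : A) : gproj 𝒩 n x = (DirectSum.decompose 𝒩 x n : A) := rfl

theorem gproj_mem (n : ℕ) (x : A) : gproj 𝒩 n x ∈ 𝒩 n := (DirectSum.decompose 𝒩 x n).2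

theorem gproj_of_mem {i : ℕ} {x : A} (hx : x ∈ 𝒩 i) (n : ℕ) :
    gproj 𝒩 n x = if n = i then x else 0 := by
  rw [gproj_apply]
  split_ifs with h
  · subst h; exact DirectSum.decompose_of_mem_same 𝒩 hx
  · exact DirectSum.decompose_of_mem_ne 𝒩 hx (Ne.symm h)

theorem gproj_range (n : ℕ) : LinearMap.range (gproj 𝒩 n) = 𝒩 n := by
  ext x
  constructor
  · rintro ⟨y, rfl⟩; exact gproj_mem 𝒩 n y
  · exact fun hx => ⟨x, by rw [gproj_of_mem 𝒩 hx, if_pos rfl]⟩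

theorem gproj_isGrading : IsGrading (gproj 𝒩) := by
  constructor
  · exact fun i j x => gproj_of_mem 𝒩 (gproj_mem 𝒩 j x) i
  · intro x
    classical
    obtain ⟨n, hn⟩ := (DirectSum.decompose 𝒩 x).support.exists_nat_subset_range
    refine ⟨n, ?_⟩
    conv_rhs => rw [← DirectSum.sum_support_decompose 𝒩 x]
    symm
    refine Finset.sum_subset hn fun i _ hi => ?_
    simpa using hi

theorem gproj_dimSeries : dimSeries (gproj 𝒩) = hilbertSeries 𝒩 := by
  ext n
  simp only [dimSeries, hilbertSeries, PowerSeries.coeff_mk]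
  rw [gproj_range]

end Pieces

section Noeth

variable {k R M : Type u} [Field k] [CommRing R] [Algebra k R] [AddCommGroup M] [Module k M]
  [Module R M] [IsScalarTower k R M]

theorem gproj_smulGraded (𝒜 : ℕ → Submodule k R) [GradedAlgebra 𝒜] (ℳ : ℕ → Submodule k M)
    [DirectSum.Decomposition ℳ] [SetLike.GradedSMul 𝒜 ℳ] :
    SMulGraded (gproj 𝒜) (gproj ℳ) := by
  intro n r x
  induction r using DirectSum.Decomposition.inductionOn 𝒜 with
  | zero => simp
  | add r s hr hs => simp only [add_smul, map_add, hr, hs, Finset.sum_add_distrib]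
  | @homogeneous i r =>
    induction x using DirectSum.Decomposition.inductionOn ℳ with
    | zero => simp
    | add x y hx hy => simp only [smul_add, map_add, hx, hy, Finset.sum_add_distrib]
    | @homogeneous j x =>
      have h : (r : R) • (x : M) ∈ ℳ (i + j) := SetLike.GradedSMul.smul_mem r.2 x.2
      rw [gproj_of_mem ℳ h]
      simp only [gproj_of_mem 𝒜 r.2, gproj_of_mem ℳ x.2]
      split_ifs with hn
      · subst hn
        rw [Finset.sum_eq_single (i, j)]
        · simp
        · rintro ⟨c, d⟩ _ hne
          by_cases h1 : c = i
          · rw [if_neg (c := d = j), smul_zero]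
            exact fun h2 => hne (Prod.ext h1 h2)
          · rw [if_neg h1, zero_smul]
        · exact fun hn => (hn (Finset.HasAntidiagonal.mem_antidiagonal.2 rfl)).elim
      · refine (Finset.sum_eq_zero fun ij hij => ?_).symm
        rw [Finset.HasAntidiagonal.mem_antidiagonal] at hij
        by_cases h1 : ij.1 = i
        · rw [if_neg (c := ij.2 = j), smul_zero]
          omega
        · rw [if_neg h1, zero_smul]

/-- A graded Noetherian module over a ring with `R_0 = k` has finite-dimensional pieces: the
`R`-submodule generated by the degree `n` piece is generated by a finite subset `S` of that piece,
and taking degree `n` parts shows that `S` spans the piece over `k`. -/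
theorem locFin_of_noetherian [IsNoetherian R M] {a : ℕ → R →ₗ[k] R} {p : ℕ → M →ₗ[k] M}
    (hz : ∀ r, ∃ c : k, a 0 r = algebraMap k R c) (hp : IsGrading p) (hs : SMulGraded a p) :
    LocFin p := by
  intro n
  obtain ⟨S, hS, hspan⟩ := (Submodule.fg_span_iff_fg_span_finset_subset (R := R)
    (LinearMap.range (p n) : Set M)).1 (IsNoetherian.noetherian _)
  have key : ∀ x ∈ Submodule.span R (S : Set M), p n x ∈ Submodule.span k (S : Set M) := by
    intro x hx
    induction hx using Submodule.closure_induction with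
    | zero => simp
    | add x y _ _ hx hy => rw [map_add]; exact Submodule.add_mem _ hx hy
    | smul_mem r x hx =>
      obtain ⟨c, hc⟩ := hz r
      have hmem := hS hx
      rw [hs, Finset.sum_eq_single (0, n), hc, hp.apply_of_mem hmem, algebraMap_smul]
      · exact Submodule.smul_mem _ _ (Submodule.subset_span hx)
      · intro ij hij hne
        rw [Finset.HasAntidiagonal.mem_antidiagonal] at hij
        rw [← hp.apply_of_mem hmem, hp.proj, if_neg, smul_zero]
        exact fun h => hne (Prod.ext (by simp only; omega) h)
      · simp
  have hle : LinearMap.range (p n) ≤ Submodule.span k (S : Set M) := by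
    intro x hx
    rw [← hp.apply_of_mem hx]
    exact key x (hspan ▸ Submodule.subset_span hx)
  have : FiniteDimensional k (Submodule.span k (S : Set M)) :=
    FiniteDimensional.span_finset k S
  exact Submodule.finiteDimensional_of_le hle

end Noeth

theorem connected_gproj {k R : Type u} [Field k] [CommRing R] [Algebra k R] [IsNoetherianRing R]
    (𝒜 : ℕ → Submodule k R) [GradedAlgebra 𝒜] (h0 : 𝒜 0 = 1) :
    IsConnectedGrading (gproj 𝒜) := by
  have hz : ∀ r, ∃ c : k, gproj 𝒜 0 r = algebraMap k R c := by
    intro r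
    have h := gproj_mem 𝒜 0 r
    rw [h0, Submodule.mem_one] at h
    obtain ⟨c, hc⟩ := h
    exact ⟨c, hc.symm⟩
  have hs : SMulGraded (gproj 𝒜) (gproj 𝒜) := gproj_smulGraded 𝒜 𝒜
  exact ⟨gproj_isGrading 𝒜, hs, locFin_of_noetherian hz (gproj_isGrading 𝒜) hs,
    gproj_of_mem 𝒜 SetLike.GradedOne.one_mem, hz⟩

/-- A decomposition of `M ⊗[R] M` compatible with the grading of `M` is the canonical one. -/
theorem range_tensorGr_eq {k R M : Type u} [Field k] [CommRing R] [Algebra k R] [AddCommGroup M]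
    [Module k M] [Module R M] [IsScalarTower k R M] {a : ℕ → R →ₗ[k] R}
    (ℳ : ℕ → Submodule k M) [DirectSum.Decomposition ℳ] (hs : SMulGraded a (gproj ℳ))
    (𝒯 : ℕ → Submodule k (M ⊗[R] M)) [DirectSum.Decomposition 𝒯]
    (h𝒯 : ∀ (i j : ℕ) (x y : M), x ∈ ℳ i → y ∈ ℳ j → x ⊗ₜ[R] y ∈ 𝒯 (i + j)) (n : ℕ) :
    LinearMap.range (tensorGr (gproj ℳ) (gproj ℳ) hs hs n) = 𝒯 n := by
  have hle : ∀ n z, tensorGr (gproj ℳ) (gproj ℳ) hs hs n z ∈ 𝒯 n := by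
    intro n z
    induction z with
    | zero => simp
    | add z w hz hw => rw [map_add]; exact Submodule.add_mem _ hz hw
    | tmul x y =>
      rw [tensorGr_tmul]
      refine Submodule.sum_mem _ fun ij hij => ?_
      rw [← Finset.HasAntidiagonal.mem_antidiagonal.1 hij]
      exact h𝒯 _ _ _ _ (gproj_mem ℳ _ _) (gproj_mem ℳ _ _)
  refine le_antisymm ?_ fun z hz => ⟨z, ?_⟩
  · rintro _ ⟨z, rfl⟩; exact hle n z
  · obtain ⟨m, hm⟩ := (tensorGr_isGrading hs hs (gproj_isGrading ℳ)
      (gproj_isGrading ℳ)).eq_zero_of_le z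
    have h1 := (hm (max m (n + 1)) (le_max_left _ _)).1
    have h2 := congrArg (gproj 𝒯 n) h1
    rw [gproj_of_mem 𝒯 hz, if_pos rfl, map_sum, Finset.sum_eq_single n,
      gproj_of_mem 𝒯 (hle n z), if_pos rfl] at h2
    · exact h2
    · intro i _ hi
      rw [gproj_of_mem 𝒯 (hle i z), if_neg (Ne.symm hi)]
    · intro h
      exact absurd (Finset.mem_range.2 (by omega)) h

theorem stmt_4 (k : Type u) [Field k] (R : Type u) [CommRing R] [Algebra k R]
    [IsNoetherianRing R]
    (𝒜 : ℕ → Submodule k R) [GradedAlgebra 𝒜] (h0 : 𝒜 0 = 1)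
    (M : Type u) [AddCommGroup M] [Module R M] [Module k M] [IsScalarTower k R M]
    [Module.Finite R M]
    (ℳ : ℕ → Submodule k M) [DirectSum.Decomposition ℳ] [SetLike.GradedSMul 𝒜 ℳ]
    (htor : ∀ i : ℕ, 0 < i →
      IsZero (((Tor (ModuleCat.{u} R) i).obj (ModuleCat.of R M)).obj (ModuleCat.of R M)))
    (𝒯 : ℕ → Submodule k (M ⊗[R] M)) [DirectSum.Decomposition 𝒯]
    (h𝒯 : ∀ (i j : ℕ) (x y : M), x ∈ ℳ i → y ∈ ℳ j → x ⊗ₜ[R] y ∈ 𝒯 (i + j)) :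
    hilbertSeries 𝒯 = hilbertSeries ℳ ^ 2 * (hilbertSeries 𝒜)⁻¹ := by
  have ha := connected_gproj 𝒜 h0
  have hs := gproj_smulGraded 𝒜 ℳ
  let G : GrMod (gproj 𝒜) :=
    { carrier := M
      p := gproj ℳ
      isGrading := gproj_isGrading ℳ
      smul := hs
      locFin := locFin_of_noetherian ha.zero (gproj_isGrading ℳ) hs }
  have hG : hilbertSeries ℳ * hilbertSeries ℳ = hilbertSeries 𝒜 * hilbertSeries 𝒯 := by
    have h := G.main ha G htor
    have hT : dimSeries (G.tensor G) = hilbertSeries 𝒯 := by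
      ext n
      simp only [dimSeries, hilbertSeries, PowerSeries.coeff_mk]
      rw [← range_tensorGr_eq ℳ hs 𝒯 h𝒯 n]
    rw [hT, gproj_dimSeries 𝒜] at h
    rw [← gproj_dimSeries ℳ]
    exact h
  rcases subsingleton_or_nontrivial R with hR | hR
  · -- Over the zero ring `H_R = 0` is not invertible, but both sides are `0`.
    have hM : Subsingleton M := Module.subsingleton R M
    have hT : Subsingleton (M ⊗[R] M) := Module.subsingleton R _
    have e1 : hilbertSeries ℳ = 0 := by
      ext n
      simp [hilbertSeries, Module.finrank_zero_of_subsingleton]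
    have e2 : hilbertSeries 𝒯 = 0 := by
      ext n
      simp [hilbertSeries, Module.finrank_zero_of_subsingleton]
    rw [e1, e2]; simp
  · have hc : PowerSeries.constantCoeff (hilbertSeries 𝒜) ≠ 0 := by
      rw [← PowerSeries.coeff_zero_eq_constantCoeff_apply, hilbertSeries, PowerSeries.coeff_mk, h0,
        Submodule.one_eq_span, finrank_span_singleton one_ne_zero]
      simp
    rw [PowerSeries.eq_mul_inv_iff_mul_eq hc, pow_two, hG, mul_comm]
end
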